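/- arXiv:2112.01248 — 3 statements merged into one kernel-verified Lean document; each statement's English description precedes it below -/
import Mathlib

section
/- Let a > 0. Every separated sequence Λ ⊂ ℝ with upper Beurling density D⁺(Λ) < 1 is an interpolating sequence for the Gaussian shift-invariant space V²_a; moreover Λ can be enlarged to a complete interpolating sequence for V²_a, i.e., there is a set Λ′ ⊇ Λ which is a complete interpolating sequence for V²_a. -/
open Filter MeasureTheory

/-- `gaussShiftSum c coef x = ∑_{n∈ℤ} coef n · e^{-c(x-n)²}`, the generic element of the
Gaussian shift-invariant space `V²_c`. -/
noncomputable def gaussShiftSum (c : ℂ) (coef : ℤ → ℂ) (x : ℝ) : ℂ :=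
  ∑' n : ℤ, coef n * Complex.exp (-c * ((x : ℂ) - (n : ℂ)) ^ 2)

/-- A set `Λ ⊆ ℝ` is separated if distinct points are at distance at least some `ε > 0`. -/
def IsSeparatedSet (Λ : Set ℝ) : Prop :=
  ∃ ε > 0, ∀ x ∈ Λ, ∀ y ∈ Λ, x ≠ y → ε ≤ |x - y|

/-- `Λ` is a sampling sequence for `V²_c`:
`A‖f‖² ≤ ∑_{λ∈Λ} |f(λ)|² ≤ B‖f‖²`, where `‖f‖²_{V²} = ∑ |c_n|²`. -/
def IsSamplingV2 (c : ℂ) (Λ : Set ℝ) : Prop :=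
  ∃ A > 0, ∃ B > 0, ∀ coef : ℤ → ℂ, Summable (fun n => ‖coef n‖ ^ 2) →
    A * (∑' n : ℤ, ‖coef n‖ ^ 2) ≤ (∑' lam : Λ, ‖gaussShiftSum c coef (lam : ℝ)‖ ^ 2) ∧
    (∑' lam : Λ, ‖gaussShiftSum c coef (lam : ℝ)‖ ^ 2) ≤ B * (∑' n : ℤ, ‖coef n‖ ^ 2)

/-- `Λ` is an interpolating sequence for `V²_c`: every `ℓ²` data on `Λ` is interpolated by
some `f ∈ V²_c`. -/
def IsInterpolatingV2 (c : ℂ) (Λ : Set ℝ) : Prop :=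
  ∀ a : Λ → ℂ, Summable (fun lam => ‖a lam‖ ^ 2) →
    ∃ coef : ℤ → ℂ, Summable (fun n => ‖coef n‖ ^ 2) ∧
      ∀ lam : Λ, gaussShiftSum c coef (lam : ℝ) = a lam

/-- A complete interpolating sequence is one that is both sampling and interpolating. -/
def IsCompleteInterpolatingV2 (c : ℂ) (Λ : Set ℝ) : Prop :=
  IsSamplingV2 c Λ ∧ IsInterpolatingV2 c Λ

/-- Lower Beurling density `D⁻(Λ) = lim_{r→∞} inf_x card(Λ ∩ [x,x+r]) / r`. -/
noncomputable def lowerBeurlingDensity (Λ : Set ℝ) : ℝ :=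
  liminf (fun r : ℝ => (⨅ x : ℝ, ((Λ ∩ Set.Icc x (x + r)).ncard : ℝ)) / r) atTop

/-- Upper Beurling density `D⁺(Λ) = lim_{r→∞} sup_x card(Λ ∩ [x,x+r]) / r`. -/
noncomputable def upperBeurlingDensity (Λ : Set ℝ) : ℝ :=
  limsup (fun r : ℝ => (⨆ x : ℝ, ((Λ ∩ Set.Icc x (x + r)).ncard : ℝ)) / r) atTop

/-- coefficients of products of linear factors -/
lemma gs_coeff_bound (s : Finset ℤ) (w : ℤ → ℝ) (hw : ∀ k, 0 < w k) (t : ℝ) (ht : 0 < t) :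
    ∀ i : ℕ, |(∏ k ∈ s, (Polynomial.X - Polynomial.C (w k))).coeff i| * t ^ i
      ≤ ∏ k ∈ s, (t + w k) := by
  classical
  induction s using Finset.induction_on with
  | empty =>
    intro i
    simp only [Finset.prod_empty, Polynomial.coeff_one]
    split_ifs with h
    · simp [h]
    · simp
  | insert b s hb ih =>
    intro i
    rw [Finset.prod_insert hb, Finset.prod_insert hb]
    set p := ∏ k ∈ s, (Polynomial.X - Polynomial.C (w k)) with hp
    set Q := ∏ k ∈ s, (t + w k) with hQ
    have hwb := hw b
    cases i with
    | zero =>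
      have h0 := ih 0
      have : ((Polynomial.X - Polynomial.C (w b)) * p).coeff 0 = - (w b * p.coeff 0) := by
        simp [sub_mul]
      have hQ0 : 0 ≤ Q := le_trans (by positivity) h0
      rw [this, abs_neg, abs_mul, abs_of_pos hwb]
      simp only [pow_zero, mul_one] at h0 ⊢
      nlinarith
    | succ i =>
      have h0 := ih i
      have h1 := ih (i+1)
      have : ((Polynomial.X - Polynomial.C (w b)) * p).coeff (i+1)
          = p.coeff i - (w b * p.coeff (i+1)) := by
        simp [sub_mul]
      rw [this]
      have h2 : |p.coeff i - (w b * p.coeff (i+1))| ≤ |p.coeff i| + w b * |p.coeff (i+1)| := by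
        refine (abs_sub _ _).trans ?_
        rw [abs_mul, abs_of_pos hwb]
      calc _ ≤ (|p.coeff i| + w b * |p.coeff (i+1)|) * t^(i+1) := by gcongr
        _ = t * (|p.coeff i| * t^i) + w b * (|p.coeff (i+1)| * t^(i+1)) := by ring
        _ ≤ t * Q + w b * Q := by gcongr
        _ = _ := by ring

lemma gs_summable_exp (c : ℝ) (hc : 0 < c) :
    Summable (fun k : ℤ => Real.exp (-c * |(k : ℝ)|)) := by
  have h : Summable (fun n : ℕ => Real.exp (-c * |((n : ℤ) : ℝ)|)) := by
    have := Real.summable_exp_nat_mul_of_ge (c := -c) (by linarith) (f := fun n => (n : ℝ)) (fun i => le_rfl)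
    simpa using this
  refine Summable.of_nat_of_neg h ?_
  simpa using h

/-- total mass of the exponential kernel -/
noncomputable def gsS (c : ℝ) : ℝ := ∑' k : ℤ, Real.exp (-c * |(k : ℝ)|)

lemma gs_sum_le (c : ℝ) (hc : 0 < c) (s : Finset ℤ) (i : ℤ) :
    ∑ k ∈ s, Real.exp (-c * |(k : ℝ) - i|) ≤ gsS c := by
  have h1 : Summable (fun k : ℤ => Real.exp (-c * |(k : ℝ) - i|)) := by
    have := (Equiv.subRight i).summable_iff.mpr (gs_summable_exp c hc)
    simpa [Function.comp_def] using this
  have h2 : ∑' k : ℤ, Real.exp (-c * |(k : ℝ) - i|) = gsS c := by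
    unfold gsS
    rw [← (Equiv.subRight i).tsum_eq (fun k : ℤ => Real.exp (-c * |(k : ℝ)|))]
    simp
  rw [← h2]
  exact h1.sum_le_tsum _ (fun _ _ => (Real.exp_pos _).le)

lemma gsS_pos (c : ℝ) (hc : 0 < c) : 0 < gsS c := by
  have := gs_sum_le c hc {0} 0
  simp at this
  linarith

lemma gs_prod_exp_le (s : Finset ℤ) (f g : ℤ → ℝ) (h0 : ∀ k ∈ s, 0 ≤ f k)
    (h : ∀ k ∈ s, f k ≤ Real.exp (g k)) : ∏ k ∈ s, f k ≤ Real.exp (∑ k ∈ s, g k) := by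
  rw [Real.exp_sum]
  exact Finset.prod_le_prod h0 h

lemma gs_sum_Ico (P lam : ℤ → ℝ) (hP : ∀ n, P (n+1) - P n = lam n) (p : ℤ) :
    ∀ q, p ≤ q → ∑ k ∈ Finset.Ico p q, lam k = P q - P p := by
  intro q hq
  induction q, hq using Int.leInduction with
  | base => simp
  | succ n hn ih =>
    have : Finset.Ico p (n+1) = insert n (Finset.Ico p n) := by ext x; simp; omega
    rw [this, Finset.sum_insert (by simp), ih]
    linarith [hP n]

lemma gs_sum_max (P lam : ℤ → ℝ) (hP : ∀ n, P (n+1) - P n = lam n) (hmono : Monotone lam)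
    (p q n : ℤ) (h1 : p ≤ n) (h2 : n < q) :
    ∑ k ∈ Finset.Ico p q, max (lam n) (lam k) = (n - p) * lam n + P q - P n := by
  have : Finset.Ico p q = Finset.Ico p n ∪ Finset.Ico n q := by
    ext x; simp; omega
  rw [this, Finset.sum_union (by
    rw [Finset.disjoint_left]; intro x; simp; omega)]
  have e1 : ∑ k ∈ Finset.Ico p n, max (lam n) (lam k) = (n - p) * lam n := by
    rw [Finset.sum_congr rfl (g := fun _ => lam n)]
    · have : ((n - p).toNat : ℝ) = ((n - p : ℤ) : ℝ) := by
        exact_mod_cast Int.toNat_of_nonneg (by omega)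
      simp [this]
    · intro k hk
      simp at hk
      exact max_eq_left (hmono hk.2.le)
  have e2 : ∑ k ∈ Finset.Ico n q, max (lam n) (lam k) = P q - P n := by
    rw [← gs_sum_Ico P lam hP n q h2.le]
    apply Finset.sum_congr rfl
    intro k hk
    simp at hk
    exact max_eq_right (hmono hk.1)
  rw [e1, e2]; ring

/-- the bound for the coefficients of the Lagrange basis polynomials -/
lemma gs_basis_bound (a : ℝ) (ha : 0 < a) (lam Q : ℤ → ℝ) (ε : ℝ) (hε : 0 < ε)
    (hsep : ∀ m n : ℤ, m ≤ n → ε * (n - m) ≤ lam n - lam m)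
    (hQ : ∀ n, Q (n+1) - Q n = lam n) :
    ∃ C > 0, ∀ p q n j : ℤ, n ∈ Finset.Ico p q → j ∈ Finset.Ico p q →
      |(Lagrange.basis (Finset.Ico p q) (fun k => Real.exp (2 * a * lam k)) j).coeff (n - p).toNat|
        ≤ C * Real.exp (2 * a * (Q j - Q n - (j - p) * lam j + lam j - max (lam n) (lam j))) := by
  set c := 2 * a * ε with hc
  have hcpos : 0 < c := by positivity
  set r := Real.exp (-c) with hr
  have hr1 : r < 1 := by rw [hr, ← Real.exp_zero]; exact Real.exp_lt_exp.mpr (by linarith)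
  have hmono : Monotone lam := by
    intro m n h
    have := hsep m n h
    have h' : (m : ℝ) ≤ n := by exact_mod_cast h
    nlinarith
  have hgap : ∀ m n : ℤ, ε * |(m : ℝ) - n| ≤ max (lam m) (lam n) - min (lam m) (lam n) := by
    intro m n
    rcases le_total m n with h | h
    · have h' : (m : ℝ) ≤ n := by exact_mod_cast h
      rw [abs_of_nonpos (by linarith), max_eq_right (hmono h), min_eq_left (hmono h)]
      linarith [hsep m n h]
    · have h' : (n : ℝ) ≤ m := by exact_mod_cast h
      rw [abs_of_nonneg (by linarith), max_eq_left (hmono h), min_eq_right (hmono h)]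
      linarith [hsep n m h]
  set w : ℤ → ℝ := fun k => Real.exp (2 * a * lam k) with hw
  have hwpos : ∀ k, 0 < w k := fun k => Real.exp_pos _
  set M : ℤ → ℤ → ℝ := fun m n => Real.exp (2 * a * max (lam m) (lam n)) with hM
  have hMpos : ∀ m n, 0 < M m n := fun _ _ => Real.exp_pos _
  set g : ℤ → ℤ → ℝ := fun k m => Real.exp (-c * |(k : ℝ) - m|) with hg
  have hmin : ∀ m n, Real.exp (2 * a * min (lam m) (lam n)) ≤ M m n * g n m := by
    intro m n
    rw [hM, hg]
    simp only
    rw [← Real.exp_add]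
    apply Real.exp_le_exp.mpr
    have := hgap n m
    rw [max_comm, min_comm] at this
    rw [hc]
    nlinarith
  have hadd : ∀ m n, w m + w n ≤ M m n * Real.exp (g n m) := by
    intro m n
    have h1 : w m + w n = M m n + Real.exp (2 * a * min (lam m) (lam n)) := by
      rw [hM, hw]
      simp only
      rcases le_total (lam m) (lam n) with h | h
      · rw [max_eq_right h, min_eq_left h, add_comm]
      · rw [max_eq_left h, min_eq_right h]
    rw [h1]
    have := Real.add_one_le_exp (g n m)
    have h3 := hmin m n
    have h4 := hMpos m n
    nlinarith
  have hsub : ∀ m n, m ≠ n → M m n * Real.exp (-(g n m / (1 - r))) ≤ |w m - w n| := by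
    intro m n hmn
    have h1 : |w m - w n| = M m n - Real.exp (2 * a * min (lam m) (lam n)) := by
      rw [hM, hw]
      simp only
      rcases le_total (lam m) (lam n) with h | h
      · rw [max_eq_right h, min_eq_left h, abs_of_nonpos]
        · ring
        · have : Real.exp (2 * a * lam m) ≤ Real.exp (2 * a * lam n) := by gcongr
          linarith
      · rw [max_eq_left h, min_eq_right h, abs_of_nonneg]
        have : Real.exp (2 * a * lam n) ≤ Real.exp (2 * a * lam m) := by gcongr
        linarith
    rw [h1]
    have h3 := hmin m n
    have h4 := hMpos m n
    have hy0 : 0 < g n m := Real.exp_pos _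
    have hyr : g n m ≤ r := by
      rw [hg, hr]
      apply Real.exp_le_exp.mpr
      have : (1 : ℝ) ≤ |(n : ℝ) - m| := by
        have : 1 ≤ |n - m| := Int.one_le_abs (by omega)
        exact_mod_cast this
      nlinarith
    have key : Real.exp (-(g n m / (1 - r))) ≤ 1 - g n m := by
      have h5 : g n m / (1 - g n m) ≤ g n m / (1 - r) := by
        apply div_le_div_of_nonneg_left hy0.le (by linarith) (by linarith)
      calc Real.exp (-(g n m / (1 - r))) ≤ Real.exp (-(g n m / (1 - g n m))) := by
            apply Real.exp_le_exp.mpr; linarith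
        _ = 1 / Real.exp (g n m / (1 - g n m)) := by rw [Real.exp_neg, one_div]
        _ ≤ 1 / (g n m / (1 - g n m) + 1) := by
            apply one_div_le_one_div_of_le
            · have : 0 < 1 - g n m := by linarith
              positivity
            · exact Real.add_one_le_exp _
        _ = 1 - g n m := by
            have : 1 - g n m ≠ 0 := by linarith
            field_simp
            ring
    nlinarith
  refine ⟨Real.exp (gsS c) * Real.exp (gsS c / (1 - r)), by positivity, ?_⟩
  intro p q n j hn hj
  set I := Finset.Ico p q with hI
  have hbasis : Lagrange.basis I w j = Polynomial.C (∏ k ∈ I.erase j, (w j - w k))⁻¹ *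
      ∏ k ∈ I.erase j, (Polynomial.X - Polynomial.C (w k)) := by
    unfold Lagrange.basis Lagrange.basisDivisor
    rw [Finset.prod_mul_distrib, ← Finset.prod_inv_distrib, map_prod]
  rw [hbasis, Polynomial.coeff_C_mul, abs_mul, abs_inv, Finset.abs_prod]
  have hcb := gs_coeff_bound (I.erase j) w hwpos (w n) (hwpos n) (n - p).toNat
  set A := |(∏ k ∈ I.erase j, (Polynomial.X - Polynomial.C (w k))).coeff (n - p).toNat| with hA
  -- numerator
  have hnum : ∏ k ∈ I.erase j, (w n + w k)
      ≤ Real.exp (∑ k ∈ I.erase j, (2 * a * max (lam n) (lam k) + g k n)) := by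
    apply gs_prod_exp_le
    · intro k _; exact (add_pos (hwpos _) (hwpos _)).le
    · intro k _
      rw [Real.exp_add]
      exact hadd n k
  have hden : Real.exp (∑ k ∈ I.erase j, (2 * a * max (lam j) (lam k) + -(g k j / (1 - r))))
      ≤ ∏ k ∈ I.erase j, |w j - w k| := by
    rw [Real.exp_sum]
    apply Finset.prod_le_prod
    · intro k _; positivity
    · intro k hk
      rw [Real.exp_add]
      exact hsub j k (Finset.ne_of_mem_erase hk).symm
  have hsumg : ∀ i : ℤ, ∑ k ∈ I.erase j, g k i ≤ gsS c := fun i => gs_sum_le c hcpos _ _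
  have hmn := gs_sum_max Q lam hQ hmono p q n (by simp [hI] at hn; exact hn.1) (by simp [hI] at hn; exact hn.2)
  have hmj := gs_sum_max Q lam hQ hmono p q j (by simp [hI] at hj; exact hj.1) (by simp [hI] at hj; exact hj.2)
  rw [← hI, ← Finset.add_sum_erase I _ hj] at hmn hmj
  rw [Finset.sum_add_distrib, ← Finset.mul_sum] at hnum hden
  rw [Finset.sum_neg_distrib, ← Finset.sum_div] at hden
  have hpow : w n ^ (n - p).toNat = Real.exp (2 * a * ((n - p) * lam n)) := by
    have : ((n - p).toNat : ℝ) = (n : ℝ) - p := by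
      have h : p ≤ n := by simp [hI] at hn; exact hn.1
      have : (((n - p).toNat : ℤ) : ℝ) = ((n - p : ℤ) : ℝ) := by
        rw [Int.toNat_of_nonneg (by omega)]
      push_cast at this
      simpa using this
    rw [hw]
    simp only
    rw [← Real.exp_nat_mul, this]
    ring_nf
  have hA2 : A ≤ Real.exp (2 * a * ∑ k ∈ I.erase j, max (lam n) (lam k) + gsS c
      - 2 * a * ((n - p) * lam n)) := by
    rw [Real.exp_sub, le_div_iff₀ (Real.exp_pos _), ← hpow]
    refine hcb.trans (hnum.trans ?_)
    apply Real.exp_le_exp.mpr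
    linarith [hsumg n]
  have hden2 : (∏ k ∈ I.erase j, |w j - w k|)⁻¹ ≤
      Real.exp (-(2 * a * ∑ k ∈ I.erase j, max (lam j) (lam k)) + gsS c / (1 - r)) := by
    have h5 : (∏ k ∈ I.erase j, |w j - w k|)⁻¹ ≤ (Real.exp (2 * a * ∑ k ∈ I.erase j, max (lam j) (lam k) + -((∑ k ∈ I.erase j, g k j) / (1 - r))))⁻¹ :=
      inv_anti₀ (Real.exp_pos _) hden
    refine h5.trans ?_
    rw [← Real.exp_neg]
    apply Real.exp_le_exp.mpr
    have : (∑ k ∈ I.erase j, g k j) / (1 - r) ≤ gsS c / (1 - r) := by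
      apply div_le_div_of_nonneg_right (hsumg j) (by linarith)
    linarith
  calc _ ≤ Real.exp (-(2 * a * ∑ k ∈ I.erase j, max (lam j) (lam k)) + gsS c / (1 - r)) *
        Real.exp (2 * a * ∑ k ∈ I.erase j, max (lam n) (lam k) + gsS c
      - 2 * a * ((n - p) * lam n)) := by
        gcongr
    _ = _ := by
        rw [← Real.exp_add, ← Real.exp_add, ← Real.exp_add]
        congr 1
        rw [max_self] at hmj
        have e1 : ∑ k ∈ I.erase j, max (lam n) (lam k) = (n - p) * lam n + Q q - Q n - max (lam n) (lam j) := by linarith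
        have e2 : ∑ k ∈ I.erase j, max (lam j) (lam k) = (j - p) * lam j + Q q - Q j - lam j := by linarith
        rw [e1, e2]
        ring

/-- uniformly localized inverses of the finite sections -/
lemma gs_section_inverse (a : ℝ) (ha : 0 < a) (lam P : ℤ → ℝ) (ε : ℝ) (hε : 0 < ε) (D C0 : ℝ)
    (hsep : ∀ m n : ℤ, m ≤ n → ε * (n - m) ≤ lam n - lam m)
    (hD : ∀ n : ℤ, |lam n - n| ≤ D)
    (hP : ∀ n : ℤ, P (n+1) - P n = lam n - n)
    (hP2 : ∀ m n : ℤ, |P n - P m| ≤ |(n : ℝ) - m| / 4 + C0) :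
    ∃ C > 0, ∀ p q : ℤ, ∃ H : ℤ → ℤ → ℝ,
      (∀ n ∈ Finset.Ico p q, ∀ j ∈ Finset.Ico p q,
        |H n j| ≤ C * Real.exp (-(a / 2) * |(n : ℝ) - j|)) ∧
      (∀ n ∈ Finset.Ico p q, ∀ m ∈ Finset.Ico p q,
        ∑ j ∈ Finset.Ico p q, H n j * Real.exp (-a * (lam j - m) ^ 2) = if n = m then 1 else 0) ∧
      (∀ j ∈ Finset.Ico p q, ∀ i ∈ Finset.Ico p q,
        ∑ n ∈ Finset.Ico p q, Real.exp (-a * (lam j - n) ^ 2) * H n i = if j = i then 1 else 0) := by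
  set Q : ℤ → ℝ := fun n => P n + (n : ℝ) * (n - 1) / 2 with hQdef
  have hQ : ∀ n, Q (n+1) - Q n = lam n := by
    intro n
    have := hP n
    simp only [hQdef]
    push_cast
    linarith
  obtain ⟨C, hC, hb⟩ := gs_basis_bound a ha lam Q ε hε hsep hQ
  set w : ℤ → ℝ := fun k => Real.exp (2 * a * lam k) with hw
  have hmono : StrictMono lam := by
    intro m n h
    have := hsep m n h.le
    have h' : (m : ℝ) < n := by exact_mod_cast h
    nlinarith
  have hinj : Function.Injective w := by
    intro x y h
    have := Real.exp_injective h
    apply hmono.injective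
    have h2 : 2 * a ≠ 0 := by positivity
    exact mul_left_cancel₀ h2 this
  refine ⟨C * Real.exp (a * D ^ 2 + 4 * a * D + 2 * a * C0), by positivity, ?_⟩
  intro p q
  set I := Finset.Ico p q with hI
  set b : ℤ → ℤ → ℝ := fun n j => (Lagrange.basis I w j).coeff (n - p).toNat with hbdef
  set H : ℤ → ℤ → ℝ := fun n j => Real.exp (a * (n : ℝ) ^ 2 + a * lam j ^ 2 - 2 * a * p * lam j) * b n j
    with hH
  have hcast : ∀ n ∈ I, (((n - p).toNat : ℕ) : ℝ) = (n : ℝ) - p := by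
    intro n hn
    have h : p ≤ n := by simp [hI] at hn; exact hn.1
    have : (((n - p).toNat : ℤ) : ℝ) = ((n - p : ℤ) : ℝ) := by
      rw [Int.toNat_of_nonneg (by omega)]
    push_cast at this
    simpa using this
  -- the Gaussian as a Vandermonde entry
  have hG : ∀ j : ℤ, ∀ n ∈ I, Real.exp (-a * (lam j - n) ^ 2) =
      Real.exp (-(a * lam j ^ 2) - a * (n : ℝ) ^ 2 + 2 * a * p * lam j) * w j ^ (n - p).toNat := by
    intro j n hn
    rw [hw]
    simp only
    rw [← Real.exp_nat_mul, ← Real.exp_add, hcast n hn]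
    ring_nf
  have hcard : I.card = (q - p).toNat := by simp [hI]
  refine ⟨H, ?_, ?_, ?_⟩
  · intro n hn j hj
    have h1 := hb p q n j hn hj
    rw [hH]
    simp only
    rw [abs_mul, abs_of_pos (Real.exp_pos _)]
    calc _ ≤ Real.exp (a * (n : ℝ) ^ 2 + a * lam j ^ 2 - 2 * a * p * lam j) *
          (C * Real.exp (2 * a * (Q j - Q n - (j - p) * lam j + lam j - max (lam n) (lam j)))) := by
          gcongr
      _ = C * Real.exp (a * (n : ℝ) ^ 2 + a * lam j ^ 2 - 2 * a * p * lam j +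
          (2 * a * (Q j - Q n - (j - p) * lam j + lam j - max (lam n) (lam j)))) := by
          rw [Real.exp_add]; ring
      _ ≤ C * Real.exp ((a * D ^ 2 + 4 * a * D + 2 * a * C0) + (-(a / 2) * |(n : ℝ) - j|)) := by
          refine mul_le_mul_of_nonneg_left (Real.exp_le_exp.mpr ?_) hC.le
          have hPn := hP2 n j
          have hdj := hD j
          have hdn := hD n
          have hPle : P j - P n ≤ |(n : ℝ) - j| / 4 + C0 := by
            rw [abs_sub_comm (n : ℝ)]; exact (le_abs_self _).trans hPn
          have hDsq : (lam j - j) ^ 2 ≤ D ^ 2 := sq_le_sq' (by linarith [abs_le.mp hdj]) (abs_le.mp hdj).2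
          have hlin : (n : ℝ) - j - 2 * (max (lam n) (lam j) - lam j) ≤ -|(n : ℝ) - j| + 4 * D := by
            have hD0 : 0 ≤ D := (abs_nonneg _).trans hdj
            rcases le_total j n with h | h
            · have h' : (j : ℝ) ≤ n := by exact_mod_cast h
              rw [max_eq_left (hmono.monotone h), abs_of_nonneg (by linarith)]
              linarith [(abs_le.mp hdj).2, (abs_le.mp hdn).1]
            · have h' : (n : ℝ) ≤ j := by exact_mod_cast h
              rw [max_eq_right (hmono.monotone h), abs_of_nonpos (by linarith)]
              linarith
          have e : a * (n : ℝ) ^ 2 + a * lam j ^ 2 - 2 * a * p * lam j +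
              (2 * a * (Q j - Q n - (j - p) * lam j + lam j - max (lam n) (lam j)))
              = a * (lam j - j) ^ 2 + 2 * a * (P j - P n)
                + a * ((n : ℝ) - j - 2 * (max (lam n) (lam j) - lam j)) := by
            simp only [hQdef]; ring
          rw [e]
          nlinarith [mul_le_mul_of_nonneg_left hDsq ha.le, mul_le_mul_of_nonneg_left hPle ha.le,
            mul_le_mul_of_nonneg_left hlin ha.le]
      _ = _ := by rw [Real.exp_add]; ring
  · intro n hn m hm
    have hdeg : (Polynomial.X ^ (m - p).toNat : Polynomial ℝ).degree < I.card := by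
      rw [Polynomial.degree_X_pow, hcard]
      simp [hI] at hm
      exact_mod_cast (by omega : (m - p).toNat < (q - p).toNat)
    have hinterp := Lagrange.eq_interpolate (hinj.injOn (s := (I : Set ℤ))) hdeg
    rw [Lagrange.interpolate_apply] at hinterp
    have hco := congrArg (fun f : Polynomial ℝ => f.coeff (n - p).toNat) hinterp
    simp only [Polynomial.finsetSum_coeff, Polynomial.coeff_C_mul, Polynomial.eval_pow,
      Polynomial.eval_X, Polynomial.coeff_X_pow] at hco
    have hiff : ((n - p).toNat = (m - p).toNat) ↔ n = m := by
      simp [hI] at hn hm; omega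
    simp only [hiff] at hco
    have : ∀ j ∈ I, H n j * Real.exp (-a * (lam j - m) ^ 2)
        = Real.exp (a * (n : ℝ) ^ 2 - a * (m : ℝ) ^ 2) * (w j ^ (m - p).toNat * b n j) := by
      intro j hj
      rw [hG j m hm, hH]
      simp only
      have : Real.exp (a * (n : ℝ) ^ 2 - a * (m : ℝ) ^ 2) =
        Real.exp (a * (n : ℝ) ^ 2 + a * lam j ^ 2 - 2 * a * p * lam j) *
        Real.exp (-(a * lam j ^ 2) - a * (m : ℝ) ^ 2 + 2 * a * p * lam j) := by
        rw [← Real.exp_add]; ring_nf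
      rw [this]; ring
    rw [Finset.sum_congr rfl this, ← Finset.mul_sum, ← hco]
    split_ifs with h
    · simp [h]
    · simp
  · intro j hj i hi
    have : ∀ n ∈ I, Real.exp (-a * (lam j - n) ^ 2) * H n i
        = Real.exp (a * lam i ^ 2 - a * lam j ^ 2 - 2 * a * p * lam i + 2 * a * p * lam j) *
          (b n i * w j ^ (n - p).toNat) := by
      intro n hn
      rw [hG j n hn, hH]
      simp only
      have : Real.exp (a * lam i ^ 2 - a * lam j ^ 2 - 2 * a * p * lam i + 2 * a * p * lam j) =
        Real.exp (a * (n : ℝ) ^ 2 + a * lam i ^ 2 - 2 * a * p * lam i) *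
        Real.exp (-(a * lam j ^ 2) - a * (n : ℝ) ^ 2 + 2 * a * p * lam j) := by
        rw [← Real.exp_add]; ring_nf
      rw [this]; ring
    rw [Finset.sum_congr rfl this, ← Finset.mul_sum]
    have hdeg : (Lagrange.basis I w i).natDegree < (q - p).toNat := by
      have h1 := Lagrange.degree_basis (hinj.injOn (s := (I : Set ℤ))) hi
      have h2 : 0 < I.card := Finset.card_pos.mpr ⟨i, hi⟩
      have h3 := Polynomial.natDegree_eq_of_degree_eq_some h1
      omega
    have hev : ∑ n ∈ I, b n i * w j ^ (n - p).toNat = (Lagrange.basis I w i).eval (w j) := by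
      rw [Polynomial.eval_eq_sum_range' hdeg]
      refine Finset.sum_nbij' (fun n => (n - p).toNat) (fun k => p + (k : ℤ)) ?_ ?_ ?_ ?_ ?_
      · intro n hn; simp [hI] at hn ⊢; omega
      · intro n hn; simp [hI] at hn ⊢; omega
      · intro n hn; simp [hI] at hn ⊢; omega
      · intro n hn; simp at hn ⊢
      · intro n hn; rfl
    rw [hev]
    split_ifs with h
    · subst h
      rw [Lagrange.eval_basis_self (hinj.injOn (s := (I : Set ℤ))) hi]
      rw [show a * lam j ^ 2 - a * lam j ^ 2 - 2 * a * p * lam j + 2 * a * p * lam j = 0 by ring]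
      simp
    · rw [Lagrange.eval_basis_of_ne (Ne.symm h) hj]
      simp

/-- Schur test, finite version -/
lemma gs_schur_fin (c : ℝ) (hc : 0 < c) (x : ℤ → ℝ) (s t : Finset ℤ) :
    ∑ j ∈ t, (∑ n ∈ s, Real.exp (-c * |(j : ℝ) - n|) * x n) ^ 2 ≤ gsS c ^ 2 * ∑ n ∈ s, x n ^ 2 := by
  have hS := gsS_pos c hc
  have h1 : ∀ j : ℤ, (∑ n ∈ s, Real.exp (-c * |(j : ℝ) - n|) * x n) ^ 2
      ≤ gsS c * ∑ n ∈ s, Real.exp (-c * |(j : ℝ) - n|) * x n ^ 2 := by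
    intro j
    have := Finset.sum_sq_le_sum_mul_sum_of_sq_le_mul s
      (r := fun n : ℤ => Real.exp (-c * |(j : ℝ) - n|) * x n)
      (f := fun n : ℤ => Real.exp (-c * |(j : ℝ) - n|))
      (g := fun n : ℤ => Real.exp (-c * |(j : ℝ) - n|) * x n ^ 2)
      (fun _ _ => (Real.exp_pos _).le) (fun _ _ => by positivity) (fun _ _ => le_of_eq (by ring))
    refine this.trans ?_
    have h2 : ∑ n ∈ s, Real.exp (-c * |(j : ℝ) - n|) ≤ gsS c := by
      have := gs_sum_le c hc s j
      simpa only [abs_sub_comm] using this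
    have h3 : 0 ≤ ∑ n ∈ s, Real.exp (-c * |(j : ℝ) - n|) * x n ^ 2 :=
      Finset.sum_nonneg fun _ _ => by positivity
    gcongr
  calc _ ≤ ∑ j ∈ t, gsS c * ∑ n ∈ s, Real.exp (-c * |(j : ℝ) - n|) * x n ^ 2 :=
        Finset.sum_le_sum fun j _ => h1 j
    _ = gsS c * ∑ n ∈ s, (∑ j ∈ t, Real.exp (-c * |(j : ℝ) - n|)) * x n ^ 2 := by
        rw [← Finset.mul_sum, Finset.sum_comm]
        congr 1
        exact Finset.sum_congr rfl fun n _ => by rw [Finset.sum_mul]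
    _ ≤ gsS c * ∑ n ∈ s, gsS c * x n ^ 2 := by
        gcongr with n hn
        exact gs_sum_le c hc t n
    _ = _ := by rw [← Finset.mul_sum]; ring

/-- finite version for a dominated kernel -/
lemma gs_schur_fin' (c : ℝ) (hc : 0 < c) (C : ℝ) (K : ℤ → ℤ → ℝ) (s t : Finset ℤ)
    (hK : ∀ j ∈ t, ∀ n ∈ s, |K j n| ≤ C * Real.exp (-c * |(j : ℝ) - n|)) (f : ℤ → ℂ) :
    ∑ j ∈ t, ‖∑ n ∈ s, (K j n : ℂ) * f n‖ ^ 2 ≤ (C * gsS c) ^ 2 * ∑ n ∈ s, ‖f n‖ ^ 2 := by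
  have h := gs_schur_fin c hc (fun n => ‖f n‖) s t
  calc _ ≤ ∑ j ∈ t, (C * ∑ n ∈ s, Real.exp (-c * |(j : ℝ) - n|) * ‖f n‖) ^ 2 := by
        apply Finset.sum_le_sum
        intro j hj
        gcongr
        refine (norm_sum_le _ _).trans ?_
        rw [Finset.mul_sum]
        apply Finset.sum_le_sum
        intro n hn
        rw [norm_mul, Complex.norm_real, Real.norm_eq_abs, ← mul_assoc]
        gcongr
        exact hK j hj n hn
    _ = C ^ 2 * ∑ j ∈ t, (∑ n ∈ s, Real.exp (-c * |(j : ℝ) - n|) * ‖f n‖) ^ 2 := by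
        rw [Finset.mul_sum]
        exact Finset.sum_congr rfl fun _ _ => by ring
    _ ≤ C ^ 2 * (gsS c ^ 2 * ∑ n ∈ s, ‖f n‖ ^ 2) := by gcongr
    _ = _ := by ring

/-- Schur test, infinite version -/
lemma gs_schur (c : ℝ) (hc : 0 < c) (C : ℝ) (K : ℤ → ℤ → ℝ)
    (hK : ∀ j n, |K j n| ≤ C * Real.exp (-c * |(j : ℝ) - n|)) (f : ℤ → ℂ)
    (hf : Summable fun n => ‖f n‖ ^ 2) :
    (∀ j, Summable fun n => (K j n : ℂ) * f n) ∧
    (Summable fun j => ‖∑' n, (K j n : ℂ) * f n‖ ^ 2) ∧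
    ∑' j, ‖∑' n, (K j n : ℂ) * f n‖ ^ 2 ≤ (C * gsS c) ^ 2 * ∑' n, ‖f n‖ ^ 2 := by
  have hsum : ∀ j, Summable fun n => (K j n : ℂ) * f n := by
    intro j
    have hC : 0 ≤ C := by
      have := (abs_nonneg _).trans (hK 0 0)
      simpa using this
    have hg : Summable fun n : ℤ => Real.exp (-c * |(j : ℝ) - n|) := by
      have := (Equiv.subRight j).summable_iff.mpr (gs_summable_exp c hc)
      simpa [Function.comp_def, abs_sub_comm] using this
    apply Summable.of_norm_bounded
      (g := fun n : ℤ => C * Real.exp (-c * |(j : ℝ) - n|) + C * ‖f n‖ ^ 2)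
      ((hg.mul_left C).add (hf.mul_left C))
    intro n
    rw [norm_mul, Complex.norm_real, Real.norm_eq_abs]
    have h1 := hK j n
    have h0 := norm_nonneg (f n)
    set e := Real.exp (-c * |(j : ℝ) - n|) with he
    have he0 : 0 < e := Real.exp_pos _
    have he1 : e ≤ 1 := by
      rw [he]
      apply Real.exp_le_one_iff.mpr
      have := abs_nonneg ((j : ℝ) - n)
      nlinarith
    have h3 : |K j n| * ‖f n‖ ≤ C * e * ‖f n‖ := by gcongr
    have h4 : e * ‖f n‖ ≤ e + ‖f n‖ ^ 2 := by
      nlinarith [sq_nonneg (‖f n‖ - 1), mul_nonneg he0.le (sq_nonneg (‖f n‖ - 1)), mul_nonneg (sub_nonneg.mpr he1) (sq_nonneg (‖f n‖))]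
    nlinarith
  have hbd : ∀ t : Finset ℤ, ∑ j ∈ t, ‖∑' n, (K j n : ℂ) * f n‖ ^ 2
      ≤ (C * gsS c) ^ 2 * ∑' n, ‖f n‖ ^ 2 := by
    intro t
    have hl : Tendsto (fun s : Finset ℤ => ∑ j ∈ t, ‖∑ n ∈ s, (K j n : ℂ) * f n‖ ^ 2) atTop
        (nhds (∑ j ∈ t, ‖∑' n, (K j n : ℂ) * f n‖ ^ 2)) := by
      apply tendsto_finsetSum
      intro j _
      exact ((hsum j).hasSum.norm).pow 2
    apply le_of_tendsto hl
    filter_upwards with s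
    refine (gs_schur_fin' c hc C K s t (fun j _ n _ => hK j n) f).trans ?_
    gcongr
    exact hf.sum_le_tsum _ (fun _ _ => by positivity)
  have h2 := summable_of_sum_le (fun j => by positivity) hbd
  exact ⟨hsum, h2, h2.tsum_le_of_sum_le hbd⟩

/-- the kernel operator on `ℓ²(ℤ)` -/
lemma gs_operator (c : ℝ) (hc : 0 < c) (C : ℝ) (hC : 0 ≤ C) (K : ℤ → ℤ → ℝ)
    (hK : ∀ j n, |K j n| ≤ C * Real.exp (-c * |(j : ℝ) - n|)) :
    ∃ T : lp (fun _ : ℤ => ℂ) 2 →L[ℂ] lp (fun _ : ℤ => ℂ) 2,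
      (∀ f j, T f j = ∑' n, (K j n : ℂ) * f n) := by
  have hmem : ∀ f : lp (fun _ : ℤ => ℂ) 2, Summable fun n => ‖f n‖ ^ 2 := by
    intro f
    have := (lp.memℓp f).summable (by norm_num)
    simpa using this
  have hmem2 : ∀ f : lp (fun _ : ℤ => ℂ) 2, Memℓp (fun j => ∑' n, (K j n : ℂ) * f n) 2 := by
    intro f
    apply memℓp_gen
    simpa using (gs_schur c hc C K hK f (hmem f)).2.1
  let L : lp (fun _ : ℤ => ℂ) 2 →ₗ[ℂ] lp (fun _ : ℤ => ℂ) 2 :=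
    { toFun := fun f => ⟨fun j => ∑' n, (K j n : ℂ) * f n, hmem2 f⟩
      map_add' := by
        intro f g
        ext j
        have h1 := (gs_schur c hc C K hK f (hmem f)).1 j
        have h2 := (gs_schur c hc C K hK g (hmem g)).1 j
        show ∑' n, (K j n : ℂ) * (f n + g n) = (∑' n, (K j n : ℂ) * f n) + ∑' n, (K j n : ℂ) * g n
        rw [← h1.tsum_add h2]
        simp only [mul_add]
      map_smul' := by
        intro z f
        ext j
        show ∑' n, (K j n : ℂ) * (z * f n) = z * (∑' n, (K j n : ℂ) * f n)
        rw [← tsum_mul_left]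
        congr 1; ext n; ring }
  have hnorm : ∀ f : lp (fun _ : ℤ => ℂ) 2, ‖f‖ ^ 2 = ∑' n, ‖f n‖ ^ 2 := by
    intro f
    have := lp.norm_rpow_eq_tsum (p := 2) (by norm_num) f
    simpa using this
  refine ⟨L.mkContinuous (C * gsS c) ?_, fun f j => rfl⟩
  intro f
  have hS := gsS_pos c hc
  apply le_of_sq_le_sq _ (by positivity)
  rw [mul_pow, hnorm, hnorm]
  exact (gs_schur c hc C K hK f (hmem f)).2.2

lemma gs_lp_norm (f : lp (fun _ : ℤ => ℂ) 2) : ‖f‖ ^ 2 = ∑' n, ‖f n‖ ^ 2 := by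
  have := lp.norm_rpow_eq_tsum (p := 2) (by norm_num) f
  simpa using this

lemma gs_lp_summable (f : lp (fun _ : ℤ => ℂ) 2) : Summable fun n => ‖f n‖ ^ 2 := by
  have := (lp.memℓp f).summable (by norm_num)
  simpa using this

/-- lower bounds from uniformly localized left inverses of finite sections -/
lemma gs_lower (c : ℝ) (hc : 0 < c) (C : ℝ) (hC : 0 ≤ C) (K : ℤ → ℤ → ℝ)
    (T : lp (fun _ : ℤ => ℂ) 2 →L[ℂ] lp (fun _ : ℤ => ℂ) 2)
    (hT : ∀ f j, T f j = ∑' n, (K j n : ℂ) * f n)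
    (hH : ∀ p q : ℤ, ∃ H : ℤ → ℤ → ℝ,
      (∀ n ∈ Finset.Ico p q, ∀ j ∈ Finset.Ico p q,
        |H n j| ≤ C * Real.exp (-c * |(n : ℝ) - j|)) ∧
      (∀ n ∈ Finset.Ico p q, ∀ m ∈ Finset.Ico p q,
        ∑ j ∈ Finset.Ico p q, H n j * K j m = if n = m then 1 else 0)) :
    ∀ f, ‖f‖ ≤ (C * gsS c) * ‖T f‖ := by
  have hS := gsS_pos c hc
  have hfin : ∀ (p q : ℤ) (f : lp (fun _ : ℤ => ℂ) 2), (∀ n, n ∉ Finset.Ico p q → f n = 0) →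
      ‖f‖ ≤ (C * gsS c) * ‖T f‖ := by
    intro p q f hf
    obtain ⟨H, hHb, hHi⟩ := hH p q
    set I := Finset.Ico p q with hI
    have hTf : ∀ j, T f j = ∑ n ∈ I, (K j n : ℂ) * f n := by
      intro j
      rw [hT]
      apply tsum_eq_sum
      intro n hn
      rw [hf n hn, mul_zero]
    have hrec : ∀ n ∈ I, ∑ j ∈ I, (H n j : ℂ) * T f j = f n := by
      intro n hn
      have : ∑ j ∈ I, (H n j : ℂ) * T f j
          = ∑ m ∈ I, ((∑ j ∈ I, H n j * K j m : ℝ) : ℂ) * f m := by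
        simp_rw [hTf, Finset.mul_sum]
        rw [Finset.sum_comm]
        apply Finset.sum_congr rfl
        intro m _
        push_cast
        rw [Finset.sum_mul]
        apply Finset.sum_congr rfl
        intro j _
        ring
      rw [this, Finset.sum_eq_single n]
      · rw [hHi n hn n hn]; simp
      · intro m hm hmn
        rw [hHi n hn m hm, if_neg hmn.symm]; simp
      · intro h; exact absurd hn h
    apply le_of_sq_le_sq _ (by positivity)
    rw [mul_pow, gs_lp_norm, gs_lp_norm]
    rw [tsum_eq_sum (s := I) (fun n hn => by rw [hf n hn]; simp)]
    calc ∑ n ∈ I, ‖f n‖ ^ 2 = ∑ n ∈ I, ‖∑ j ∈ I, (H n j : ℂ) * T f j‖ ^ 2 :=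
          Finset.sum_congr rfl fun n hn => by rw [hrec n hn]
      _ ≤ (C * gsS c) ^ 2 * ∑ j ∈ I, ‖T f j‖ ^ 2 := gs_schur_fin' c hc C H I I hHb _
      _ ≤ _ := by
          gcongr
          exact (gs_lp_summable (T f)).sum_le_tsum _ (fun _ _ => by positivity)
  intro f
  have hsum := lp.hasSum_single (p := 2) (by norm_num) f
  have h1 : Tendsto (fun s : Finset ℤ => ‖∑ n ∈ s, lp.single 2 n (f n)‖) atTop (nhds ‖f‖) :=
    hsum.norm
  have h2 : Tendsto (fun s : Finset ℤ => (C * gsS c) * ‖T (∑ n ∈ s, lp.single 2 n (f n))‖) atTop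
      (nhds ((C * gsS c) * ‖T f‖)) :=
    (((T.continuous.tendsto f).comp hsum).norm).const_mul _
  refine le_of_tendsto_of_tendsto h1 h2 ?_
  filter_upwards with s
  obtain ⟨b, hb⟩ := s.bddAbove
  obtain ⟨a, ha⟩ := s.bddBelow
  apply hfin a (b+1)
  intro n hn
  have hns : n ∉ s := by
    intro h
    apply hn
    have h1 := hb (Finset.mem_coe.mpr h)
    have h2 := ha (Finset.mem_coe.mpr h)
    simp; omega
  rw [lp.coeFn_sum, Finset.sum_apply]
  apply Finset.sum_eq_zero
  intro m hm
  have : n ≠ m := fun h => hns (h ▸ hm)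
  simp [lp.single_apply, this]

/-- bounded invertibility of the kernel operator -/
lemma gs_invertible (c c' : ℝ) (hc : 0 < c) (hc' : 0 < c') (C C' : ℝ) (hC : 0 ≤ C) (hC' : 0 ≤ C')
    (K : ℤ → ℤ → ℝ)
    (hK : ∀ j n, |K j n| ≤ C' * Real.exp (-c' * |(j : ℝ) - n|))
    (hH : ∀ p q : ℤ, ∃ H : ℤ → ℤ → ℝ,
      (∀ n ∈ Finset.Ico p q, ∀ j ∈ Finset.Ico p q,
        |H n j| ≤ C * Real.exp (-c * |(n : ℝ) - j|)) ∧
      (∀ n ∈ Finset.Ico p q, ∀ m ∈ Finset.Ico p q,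
        ∑ j ∈ Finset.Ico p q, H n j * K j m = if n = m then 1 else 0) ∧
      (∀ j ∈ Finset.Ico p q, ∀ i ∈ Finset.Ico p q,
        ∑ n ∈ Finset.Ico p q, K j n * H n i = if j = i then 1 else 0)) :
    ∃ T : lp (fun _ : ℤ => ℂ) 2 →L[ℂ] lp (fun _ : ℤ => ℂ) 2,
      (∀ f j, T f j = ∑' n, (K j n : ℂ) * f n) ∧
      (∀ f, ‖f‖ ≤ (C * gsS c) * ‖T f‖) ∧ Function.Surjective T := by
  obtain ⟨T, hT⟩ := gs_operator c' hc' C' hC' K hK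
  obtain ⟨T', hT'⟩ := gs_operator c' hc' C' hC' (fun j n => K n j) (fun j n => by
    rw [abs_sub_comm (j : ℝ)]; exact hK n j)
  have hS := gsS_pos c hc
  have hlow := gs_lower c hc C hC K T hT (fun p q => by
    obtain ⟨H, h1, h2, h3⟩ := hH p q
    exact ⟨H, h1, h2⟩)
  have hlow' := gs_lower c hc C hC (fun j n => K n j) T' hT' (fun p q => by
    obtain ⟨H, h1, h2, h3⟩ := hH p q
    refine ⟨fun j n => H n j, ?_, ?_⟩
    · intro n hn j hj
      rw [abs_sub_comm (n : ℝ)]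
      exact h1 j hj n hn
    · intro n hn m hm
      have := h3 m hm n hn
      rw [Finset.sum_congr rfl (g := fun j => K m j * H j n) (fun j _ => mul_comm _ _), this]
      simp only [eq_comm])
  refine ⟨T, hT, hlow, ?_⟩
  have hanti : AntilipschitzWith (Real.toNNReal (C * gsS c)) T := by
    apply ContinuousLinearMap.antilipschitz_of_bound
    intro f
    rw [Real.coe_toNNReal _ (by positivity)]
    exact hlow f
  have hclosed : IsClosed (Set.range T) :=
    hanti.isClosed_range T.uniformContinuous
  have hR : IsClosed ((LinearMap.range T.toLinearMap : Submodule ℂ _) : Set (lp (fun _ : ℤ => ℂ) 2)) := by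
    rw [LinearMap.coe_range]; exact hclosed
  have hcomp : CompleteSpace (LinearMap.range T.toLinearMap) := hR.completeSpace_coe
  have horth : (LinearMap.range T.toLinearMap)ᗮ = ⊥ := by
    rw [Submodule.eq_bot_iff]
    intro v hv
    have hz : T' v = 0 := by
      ext n
      rw [hT']
      have h1 := (Submodule.mem_orthogonal _ v).mp hv (T (lp.single 2 n 1)) ⟨_, rfl⟩
      rw [lp.inner_eq_tsum] at h1
      have h2 : ∀ j, T (lp.single 2 n 1) j = (K j n : ℂ) := by
        intro j
        rw [hT, tsum_eq_single n]
        · simp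
        · intro m hm
          simp [lp.single_apply, hm]
      simp only [h2] at h1
      show _ = (0 : ℂ)
      rw [← h1]
      congr 1
      ext j
      simp [mul_comm]
    have := hlow' v
    rw [hz] at this
    simp at this
    exact this
  have htop := (Submodule.orthogonal_eq_bot_iff).mp horth
  exact LinearMap.range_eq_top.mp htop

lemma gs_CIS (a : ℝ) (ha : 0 < a) (lam P : ℤ → ℝ) (ε : ℝ) (hε : 0 < ε) (D C0 : ℝ)
    (hsep : ∀ m n : ℤ, m ≤ n → ε * (n - m) ≤ lam n - lam m)
    (hD : ∀ n : ℤ, |lam n - n| ≤ D)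
    (hP : ∀ n : ℤ, P (n+1) - P n = lam n - n)
    (hP2 : ∀ m n : ℤ, |P n - P m| ≤ |(n : ℝ) - m| / 4 + C0) :
    IsCompleteInterpolatingV2 (a : ℂ) (Set.range lam) := by
  obtain ⟨C, hC, hinv⟩ := gs_section_inverse a ha lam P ε hε D C0 hsep hD hP hP2
  have hmono : StrictMono lam := by
    intro m n h
    have := hsep m n h.le
    have h' : (m : ℝ) < n := by exact_mod_cast h
    nlinarith
  obtain ⟨T, hT, hlow, hsurj⟩ := gs_invertible (a / 2) a (by positivity) ha C
    (Real.exp (a * D ^ 2 + a / 2)) hC.le (Real.exp_pos _).le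
    (fun j n => Real.exp (-a * (lam j - n) ^ 2)) (by
      intro j n
      rw [abs_of_pos (Real.exp_pos _), ← Real.exp_add]
      apply Real.exp_le_exp.mpr
      have h1 : (lam j - j) ^ 2 ≤ D ^ 2 := sq_le_sq' (by linarith [abs_le.mp (hD j)]) (abs_le.mp (hD j)).2
      have h2 : |(j : ℝ) - n| ^ 2 = ((j : ℝ) - n) ^ 2 := sq_abs _
      have h3 : |(j : ℝ) - n| - D ^ 2 - 1 / 2 ≤ (lam j - n) ^ 2 := by
        nlinarith [sq_nonneg (|(j : ℝ) - n| - 1), sq_nonneg ((lam j - n) + (lam j - j))]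
      nlinarith) hinv
  have hval : ∀ (f : lp (fun _ : ℤ => ℂ) 2) (j : ℤ), gaussShiftSum (a : ℂ) f (lam j) = T f j := by
    intro f j
    rw [hT]
    unfold gaussShiftSum
    congr 1
    ext n
    push_cast
    ring
  let e : ℤ ≃ Set.range lam := Equiv.ofInjective lam hmono.injective
  have he : ∀ j, ((e j : Set.range lam) : ℝ) = lam j := fun j => rfl
  have hmk : ∀ coef : ℤ → ℂ, Summable (fun n => ‖coef n‖ ^ 2) →
      ∃ f : lp (fun _ : ℤ => ℂ) 2, (f : ℤ → ℂ) = coef := by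
    intro coef hcoef
    exact ⟨⟨coef, memℓp_gen (by simpa using hcoef)⟩, rfl⟩
  have hS := gsS_pos (a / 2) (by positivity)
  constructor
  · refine ⟨1 / (C * gsS (a / 2)) ^ 2, by positivity, ‖T‖ ^ 2 + 1, by positivity, ?_⟩
    intro coef hcoef
    obtain ⟨f, rfl⟩ := hmk coef hcoef
    have h1 : ∑' x : Set.range lam, ‖gaussShiftSum (a : ℂ) f (x : ℝ)‖ ^ 2 = ‖T f‖ ^ 2 := by
      rw [← e.tsum_eq, gs_lp_norm]
      simp only [he, hval]
    rw [h1, ← gs_lp_norm]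
    constructor
    · have := hlow f
      rw [one_div_mul_eq_div, div_le_iff₀ (by positivity)]
      calc ‖f‖ ^ 2 ≤ (C * gsS (a / 2) * ‖T f‖) ^ 2 := by gcongr
        _ = _ := by ring
    · have := T.le_opNorm f
      calc ‖T f‖ ^ 2 ≤ (‖T‖ * ‖f‖) ^ 2 := by gcongr
        _ ≤ _ := by nlinarith [sq_nonneg ‖f‖]
  · intro d hd
    obtain ⟨g, hg⟩ := hmk (fun j => d (e j)) ((e.summable_iff (f := fun x => ‖d x‖ ^ 2)).mpr hd)
    obtain ⟨f, hf⟩ := hsurj g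
    refine ⟨f, gs_lp_summable f, ?_⟩
    intro x
    obtain ⟨j, rfl⟩ := e.surjective x
    rw [he, hval, hf, hg]

lemma gs_interp_mono (c : ℂ) (Λ Λ' : Set ℝ) (h : Λ ⊆ Λ') (hi : IsInterpolatingV2 c Λ') :
    IsInterpolatingV2 c Λ := by
  classical
  intro d hd
  obtain ⟨coef, h1, h2⟩ := hi (fun x => if hx : (x : ℝ) ∈ Λ then d ⟨x, hx⟩ else 0) (by
    rw [← (Set.inclusion_injective h).summable_iff]
    · convert hd using 2 with x
      simp
    · intro x hx
      have : (x : ℝ) ∉ Λ := fun hx' => hx ⟨⟨x, hx'⟩, rfl⟩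
      simp [this])
  refine ⟨coef, h1, ?_⟩
  intro x
  have := h2 ⟨x, h x.2⟩
  simpa using this

lemma gs_count (Λ : Set ℝ) (ε : ℝ) (hε : 0 < ε)
    (hsep : ∀ x ∈ Λ, ∀ y ∈ Λ, x ≠ y → ε ≤ |x - y|) (x r : ℝ) :
    (Λ ∩ Set.Icc x (x + r)).Finite ∧ ((Λ ∩ Set.Icc x (x + r)).ncard : ℝ) ≤ |r| / ε + 1 := by
  have hmaps : ∀ y ∈ Λ ∩ Set.Icc x (x + r),
      ⌊(y - x) / ε⌋₊ ∈ ((Finset.range (⌊|r| / ε⌋₊ + 1) : Finset ℕ) : Set ℕ) := by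
    rintro y ⟨_, hy1, hy2⟩
    simp only [Finset.coe_range, Set.mem_Iio, Nat.lt_succ_iff]
    apply Nat.floor_le_floor
    gcongr
    exact le_trans (by linarith) (le_abs_self r)
  have hinj : Set.InjOn (fun y => ⌊(y - x) / ε⌋₊) (Λ ∩ Set.Icc x (x + r)) := by
    rintro y ⟨hyΛ, hy1, hy2⟩ z ⟨hzΛ, hz1, hz2⟩ h
    by_contra hne
    have hs := hsep y hyΛ z hzΛ hne
    simp only at h
    have a1 := Nat.floor_le (a := (y - x) / ε) (by have : 0 ≤ y - x := by linarith
                                                   positivity)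
    have a2 := Nat.floor_le (a := (z - x) / ε) (by have : 0 ≤ z - x := by linarith
                                                   positivity)
    have b1 := Nat.lt_floor_add_one ((y - x) / ε)
    have b2 := Nat.lt_floor_add_one ((z - x) / ε)
    rw [h] at a1 b1
    rw [le_div_iff₀ hε] at a1 a2
    rw [div_lt_iff₀ hε] at b1 b2
    have : |y - z| < ε := by rw [abs_lt]; constructor <;> linarith
    linarith
  have hfin : (Λ ∩ Set.Icc x (x + r)).Finite :=
    Set.Finite.of_injOn hmaps hinj (Finset.finite_toSet _)
  refine ⟨hfin, ?_⟩
  have := Set.ncard_le_ncard_of_injOn _ hmaps hinj (Finset.finite_toSet _)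
  rw [Set.ncard_coe_finset, Finset.card_range] at this
  have h2 : ((Λ ∩ Set.Icc x (x + r)).ncard : ℝ) ≤ ((⌊|r| / ε⌋₊ + 1 : ℕ) : ℝ) := by exact_mod_cast this
  have h3 := Nat.floor_le (a := |r| / ε) (by positivity)
  push_cast at h2
  linarith

lemma gs_density (Λ : Set ℝ) (hsep : IsSeparatedSet Λ) (hdens : upperBeurlingDensity Λ < 1) :
    ∃ θ : ℝ, 0 < θ ∧ θ < 1 ∧ ∃ R : ℝ, ∀ r, R ≤ r → ∀ x,
      ((Λ ∩ Set.Icc x (x + r)).ncard : ℝ) ≤ θ * r := by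
  obtain ⟨ε, hε, hs⟩ := hsep
  have hbdd : ∀ r, BddAbove (Set.range fun x : ℝ => ((Λ ∩ Set.Icc x (x + r)).ncard : ℝ)) := by
    intro r
    refine ⟨|r| / ε + 1, ?_⟩
    rintro _ ⟨x, rfl⟩
    exact (gs_count Λ ε hε hs x r).2
  obtain ⟨θ, h1, h2⟩ := exists_between (max_lt hdens one_pos)
  have hlim : upperBeurlingDensity Λ < θ := (le_max_left _ _).trans_lt h1
  have h0 : 0 < θ := (le_max_right _ _).trans_lt h1
  unfold upperBeurlingDensity at hlim
  have hev := Filter.eventually_lt_of_limsup_lt hlim (by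
    refine ⟨1 / ε + 1, ?_⟩
    rw [Filter.eventually_map]
    filter_upwards [Filter.eventually_ge_atTop (1 : ℝ)] with r hr
    rw [div_le_iff₀ (by linarith)]
    have : (⨆ x : ℝ, ((Λ ∩ Set.Icc x (x + r)).ncard : ℝ)) ≤ |r| / ε + 1 :=
      ciSup_le fun x => (gs_count Λ ε hε hs x r).2
    rw [abs_of_pos (by linarith)] at this
    have e : (1 / ε + 1) * r = r / ε + r := by ring
    linarith)
  obtain ⟨R, hR⟩ := Filter.eventually_atTop.mp hev
  refine ⟨θ, h0, h2, max R 1, ?_⟩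
  intro r hr x
  have hr1 : 1 ≤ r := (le_max_right _ _).trans hr
  have := hR r ((le_max_left _ _).trans hr)
  rw [div_lt_iff₀ (by linarith)] at this
  exact (le_ciSup (hbdd r) x).trans this.le

lemma gs_layer (N0 u : ℝ) (hN0 : 0 ≤ N0) (hu : 0 ≤ u) (L : ℕ) :
    min u (L * N0) ≤ ∑ i ∈ Finset.range L, if (i : ℝ) * N0 ≤ u then N0 else 0 := by
  induction L with
  | zero => simp [hu]
  | succ L ih =>
    rw [Finset.sum_range_succ]
    split_ifs with h
    · rw [min_eq_right h] at ih
      refine (min_le_right _ _).trans ?_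
      push_cast; linarith
    · push Not at h
      rw [min_eq_left h.le] at ih
      refine (min_le_left _ _).trans ?_
      linarith

lemma gs_layer_sum (S : Finset ℝ) (u : ℝ → ℝ) (N0 θ : ℝ) (hN0 : 0 ≤ N0) (L : ℕ)
    (h0 : ∀ y ∈ S, 0 ≤ u y) (h1 : ∀ y ∈ S, u y ≤ L * N0)
    (hc : ∀ i : ℕ, i < L → ((S.filter fun y => (i : ℝ) * N0 ≤ u y).card : ℝ) ≤ θ * ((L - i) * N0)) :
    ∑ y ∈ S, u y ≤ θ * (L * N0) * (L * N0 + N0) / 2 := by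
  have hs : ∀ M : ℕ, ∑ i ∈ Finset.range M, N0 * (θ * (((L : ℝ) - i) * N0))
      = θ * N0 ^ 2 * (L * M - M * (M - 1) / 2) := by
    intro M
    induction M with
    | zero => simp
    | succ M ih => rw [Finset.sum_range_succ, ih]; push_cast; ring
  calc ∑ y ∈ S, u y ≤ ∑ y ∈ S, ∑ i ∈ Finset.range L, if (i : ℝ) * N0 ≤ u y then N0 else 0 := by
        apply Finset.sum_le_sum
        intro y hy
        have := gs_layer N0 (u y) hN0 (h0 y hy) L
        rwa [min_eq_left (h1 y hy)] at this
    _ = ∑ i ∈ Finset.range L, N0 * ((S.filter fun y => (i : ℝ) * N0 ≤ u y).card : ℝ) := by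
        rw [Finset.sum_comm]
        apply Finset.sum_congr rfl
        intro i _
        rw [← Finset.sum_filter, Finset.sum_const, nsmul_eq_mul, mul_comm]
    _ ≤ ∑ i ∈ Finset.range L, N0 * (θ * (((L : ℝ) - i) * N0)) := by
        apply Finset.sum_le_sum
        intro i hi
        gcongr
        exact hc i (Finset.mem_range.mp hi)
    _ = _ := by rw [hs]; ring

/-- filling up one block -/
lemma gs_block (Λ : Set ℝ) (hfin : ∀ x r : ℝ, (Λ ∩ Set.Icc x (x + r)).Finite)
    (θ : ℝ) (hθ1 : θ < 1) (N0 L N : ℕ) (hN0 : 0 < N0) (hL : 0 < L) (hN : N = L * N0)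
    (hNbig : θ * ((N : ℝ) + N0) ≤ N - 1)
    (hcount : ∀ r : ℝ, (N0 : ℝ) ≤ r → ∀ x, ((Λ ∩ Set.Icc x (x + r)).ncard : ℝ) ≤ θ * r)
    (b : ℝ) :
    ∃ F : Finset ℝ, F.card = N ∧ (∀ y ∈ F, b ≤ y ∧ y < b + N) ∧
      (∀ y ∈ Λ, b ≤ y → y < b + N → y ∈ F) ∧
      |∑ y ∈ F, (y - b) - (N : ℝ) * (N - 1) / 2| ≤ N / 8 ∧
      (∀ y ∈ F, y ∉ Λ → (∀ x ∈ Λ, 1 / (32 * (N : ℝ)) ≤ |y - x|) ∧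
        (∀ z ∈ F, z ∉ Λ → z ≠ y → 1 / (32 * (N : ℝ)) ≤ |y - z|) ∧
        b + 1 / (32 * (N : ℝ)) ≤ y ∧ y ≤ b + N - 1 / (32 * (N : ℝ))) := by
  classical
  have hNpos : 0 < N := by rw [hN]; positivity
  have hNR : (N : ℝ) = L * N0 := by rw [hN]; push_cast; ring
  have hN0R : (0 : ℝ) < N0 := by exact_mod_cast hN0
  have hNposR : (0 : ℝ) < N := by exact_mod_cast hNpos
  have hLR : (1 : ℝ) ≤ L := by exact_mod_cast hL
  have hfS : (Λ ∩ Set.Ico b (b + N)).Finite :=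
    (hfin b N).subset (Set.inter_subset_inter_right _ Set.Ico_subset_Icc_self)
  set S := hfS.toFinset with hS
  have hmemS : ∀ y, y ∈ S ↔ y ∈ Λ ∧ b ≤ y ∧ y < b + N := by
    intro y; simp [hS]
  have hsubcard : ∀ (S' : Finset ℝ) (x r : ℝ), (N0 : ℝ) ≤ r →
      (∀ y ∈ S', y ∈ Λ ∧ x ≤ y ∧ y ≤ x + r) → (S'.card : ℝ) ≤ θ * r := by
    intro S' x r hr h
    refine le_trans ?_ (hcount r hr x)
    rw [← Set.ncard_coe_finset]
    have hle : (S' : Set ℝ).ncard ≤ (Λ ∩ Set.Icc x (x + r)).ncard :=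
      Set.ncard_le_ncard (fun y hy => by
        have := h y hy
        exact ⟨this.1, this.2.1, this.2.2⟩) (hfin x r)
    rwa [Nat.cast_le]
  have hcardS : (S.card : ℝ) ≤ θ * N := by
    apply hsubcard S b N (by rw [hNR]; nlinarith)
    intro y hy
    have := (hmemS y).mp hy
    exact ⟨this.1, this.2.1, this.2.2.le⟩
  have hcardlt : S.card < N := by
    have : (S.card : ℝ) < N := by nlinarith
    exact_mod_cast this
  have hLi : ∀ i : ℕ, i < L → (N0 : ℝ) ≤ (L - i) * N0 := by
    intro i hi
    have : (i : ℝ) + 1 ≤ L := by exact_mod_cast hi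
    nlinarith
  have hsum1 : ∑ y ∈ S, (y - b) ≤ (N : ℝ) * (N - 1) / 2 := by
    have := gs_layer_sum S (fun y => y - b) N0 θ hN0R.le L
      (fun y hy => by linarith [((hmemS y).mp hy).2.1])
      (fun y hy => by linarith [((hmemS y).mp hy).2.2])
      (fun i hi => by
        apply hsubcard _ (b + i * N0) _ (hLi i hi)
        intro y hy
        rw [Finset.mem_filter, hmemS] at hy
        refine ⟨hy.1.1, by linarith, by rw [hNR] at hy; linarith⟩)
    rw [← hNR] at this
    nlinarith
  have hsum2 : ∑ y ∈ S, (b + N - y) ≤ (N : ℝ) * (N - 1) / 2 := by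
    have := gs_layer_sum S (fun y => b + N - y) N0 θ hN0R.le L
      (fun y hy => by linarith [((hmemS y).mp hy).2.2])
      (fun y hy => by linarith [((hmemS y).mp hy).2.1])
      (fun i hi => by
        apply hsubcard _ b _ (hLi i hi)
        intro y hy
        rw [Finset.mem_filter, hmemS] at hy
        refine ⟨hy.1.1, by linarith, by rw [hNR] at hy; linarith⟩)
    rw [← hNR] at this
    nlinarith
  set K := N - S.card with hK
  have hKpos : 0 < K := by omega
  have hKR : (K : ℝ) = N - S.card := by rw [hK, Nat.cast_sub hcardlt.le]
  have hKposR : (0 : ℝ) < K := by exact_mod_cast hKpos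
  have hKN : (K : ℝ) ≤ N := by rw [hKR]; linarith [(Nat.cast_nonneg S.card : (0:ℝ) ≤ S.card)]
  set τ := ((N : ℝ) * (N - 1) / 2 - ∑ y ∈ S, (y - b)) / K with hτ
  have hτ0 : 0 ≤ τ := div_nonneg (by linarith) hKposR.le
  have hKτ : K * τ = (N : ℝ) * (N - 1) / 2 - ∑ y ∈ S, (y - b) := by
    rw [hτ]; field_simp
  have hsumrel : ∑ y ∈ S, (b + N - y) = S.card * N - ∑ y ∈ S, (y - b) := by
    have : ∑ y ∈ S, (b + N - y) = ∑ y ∈ S, ((N : ℝ) - (y - b)) :=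
      Finset.sum_congr rfl fun y _ => by ring
    rw [this, Finset.sum_sub_distrib]; simp
  have hτ1 : τ ≤ N - 1 / 8 := by
    have : K * τ ≤ K * (N - 1 / 8) := by
      rw [hKτ]
      have : (S.card : ℝ) = N - K := by rw [hKR]; ring
      rw [hsumrel, this] at hsum2
      nlinarith
    exact le_of_mul_le_mul_left this hKposR
  set t := b + τ with ht
  set ρ : ℝ := 1 / (32 * (N : ℝ)) with hρ
  have hρpos : 0 < ρ := by positivity
  have hρN : ρ * N = 1 / 32 := by rw [hρ]; field_simp
  set y : ℕ → ℝ := fun i => t + ρ * (2 * i + 1) with hy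
  have hyinj : ∀ i j : ℕ, i ≠ j → 2 * ρ ≤ |y i - y j| := by
    intro i j hij
    have : y i - y j = 2 * ρ * ((i : ℝ) - j) := by simp only [hy]; ring
    rw [this, abs_mul, abs_of_pos (by positivity)]
    have h1 : (1 : ℝ) ≤ |(i : ℝ) - j| := by
      have : 1 ≤ |(i : ℤ) - j| := Int.one_le_abs (by omega)
      exact_mod_cast this
    nlinarith
  have hyrange : ∀ i ∈ Finset.range (2 * N), t + ρ ≤ y i ∧ y i ≤ t + 1 / 8 - ρ := by
    intro i hi
    have h1 : (i : ℝ) + 1 ≤ 2 * N := by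
      have := Finset.mem_range.mp hi
      exact_mod_cast this
    have h2 : (0 : ℝ) ≤ i := Nat.cast_nonneg i
    simp only [hy]
    constructor
    · nlinarith
    · nlinarith
  set bad := (Finset.range (2 * N)).filter (fun i => ∃ x ∈ Λ, |y i - x| < ρ) with hbad
  set good := (Finset.range (2 * N)).filter (fun i => ¬ ∃ x ∈ Λ, |y i - x| < ρ) with hgood
  have hbadcard : bad.card ≤ S.card := by
    have hch : ∀ i : ℕ, ∃ x : ℝ, i ∈ bad → x ∈ S ∧ |y i - x| < ρ := by
      intro i
      by_cases hi : i ∈ bad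
      · obtain ⟨hi1, x, hx, hxy⟩ := Finset.mem_filter.mp hi
        refine ⟨x, fun _ => ⟨(hmemS x).mpr ⟨hx, ?_, ?_⟩, hxy⟩⟩
        · have := hyrange i hi1
          have := abs_lt.mp hxy
          linarith
        · have := hyrange i hi1
          have := abs_lt.mp hxy
          linarith
      · exact ⟨0, fun h => absurd h hi⟩
    choose φ hφ using hch
    apply Finset.card_le_card_of_injOn φ (fun i hi => (hφ i hi).1)
    intro i hi j hj hij
    by_contra hne
    have h1 := (hφ i hi).2
    have h2 := (hφ j hj).2
    have h3 := hyinj i j hne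
    rw [hij] at h1
    have h4 : |y i - y j| ≤ |y i - φ j| + |φ j - y j| := abs_sub_le _ _ _
    rw [abs_sub_comm (φ j)] at h4
    linarith
  have hsplit : bad.card + good.card = 2 * N := by
    rw [hbad, hgood, Finset.card_filter_add_card_filter_not, Finset.card_range]
  obtain ⟨W, hWsub, hWcard⟩ := Finset.exists_subset_card_eq (s := good) (n := K) (by omega)
  have hWmem : ∀ i ∈ W, i ∈ Finset.range (2 * N) ∧ ∀ x ∈ Λ, ρ ≤ |y i - x| := by
    intro i hi
    obtain ⟨h1, h2⟩ := Finset.mem_filter.mp (hWsub hi)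
    push Not at h2
    exact ⟨h1, h2⟩
  have hyi : Function.Injective y := by
    intro i j h
    by_contra hne
    have := hyinj i j hne
    rw [h, sub_self, abs_zero] at this
    linarith
  set A := W.image y with hA
  have hAcard : A.card = K := by rw [hA, Finset.card_image_of_injective _ hyi, hWcard]
  have hAnot : ∀ z ∈ A, z ∉ Λ := by
    intro z hz hzΛ
    obtain ⟨i, hi, rfl⟩ := Finset.mem_image.mp hz
    have := (hWmem i hi).2 _ hzΛ
    simp at this
    linarith
  have hdisj : Disjoint S A := by
    rw [Finset.disjoint_left]
    intro z hz hzA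
    exact hAnot z hzA ((hmemS z).mp hz).1
  have hinA : ∀ z ∈ S ∪ A, z ∉ Λ → z ∈ A := by
    intro z hz hzΛ
    rcases Finset.mem_union.mp hz with h | h
    · exact absurd ((hmemS z).mp h).1 hzΛ
    · exact h
  refine ⟨S ∪ A, ?_, ?_, ?_, ?_, ?_⟩
  · rw [Finset.card_union_of_disjoint hdisj, hAcard]; omega
  · intro z hz
    rcases Finset.mem_union.mp hz with h | h
    · exact ((hmemS z).mp h).2
    · obtain ⟨i, hi, rfl⟩ := Finset.mem_image.mp h
      have := hyrange i (hWmem i hi).1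
      constructor <;> linarith
  · intro z hz h1 h2
    exact Finset.mem_union_left _ ((hmemS z).mpr ⟨hz, h1, h2⟩)
  · rw [Finset.sum_union hdisj]
    have e1 : ∑ z ∈ A, (z - b) = K * τ + ∑ z ∈ A, (z - t) := by
      have : ∑ z ∈ A, (z - b) = ∑ z ∈ A, (τ + (z - t)) :=
        Finset.sum_congr rfl fun z _ => by rw [ht]; ring
      rw [this, Finset.sum_add_distrib, Finset.sum_const, hAcard, nsmul_eq_mul]
    have e2 : |∑ z ∈ A, (z - t)| ≤ N / 8 := by
      calc |∑ z ∈ A, (z - t)| ≤ ∑ z ∈ A, |z - t| := Finset.abs_sum_le_sum_abs _ _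
        _ ≤ ∑ z ∈ A, (1 / 8 : ℝ) := by
            apply Finset.sum_le_sum
            intro z hz
            obtain ⟨i, hi, rfl⟩ := Finset.mem_image.mp hz
            have := hyrange i (hWmem i hi).1
            rw [abs_le]; constructor <;> linarith
        _ = K / 8 := by rw [Finset.sum_const, hAcard, nsmul_eq_mul]; ring
        _ ≤ N / 8 := by linarith
    rw [e1, hKτ]
    convert e2 using 2
    ring
  · intro z hz hzΛ
    obtain ⟨i, hi, rfl⟩ := Finset.mem_image.mp (hinA z hz hzΛ)
    refine ⟨(hWmem i hi).2, ?_, ?_, ?_⟩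
    · intro z' hz' hz'Λ hne
      obtain ⟨j, hj, rfl⟩ := Finset.mem_image.mp (hinA z' hz' hz'Λ)
      have := hyinj i j (fun h => hne (by rw [h]))
      linarith
    · have := hyrange i (hWmem i hi).1
      linarith
    · have := hyrange i (hWmem i hi).1
      linarith

/-- increasing enumeration of a finite set -/
lemma gs_enum (F : Finset ℝ) (N : ℕ) (hF : F.card = N) :
    ∃ g : ℕ → ℝ, (∀ i < N, g i ∈ F) ∧ (∀ i j, i < j → j < N → g i < g j) ∧
      (∀ y ∈ F, ∃ i < N, g i = y) ∧ ∑ i ∈ Finset.range N, g i = ∑ y ∈ F, y := by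
  let o := F.orderEmbOfFin hF
  refine ⟨fun i => if h : i < N then o ⟨i, h⟩ else 0, ?_, ?_, ?_, ?_⟩
  · intro i hi
    simp only [hi, dif_pos]
    exact Finset.orderEmbOfFin_mem _ _ _
  · intro i j hij hj
    simp only [hj, hij.trans hj, dif_pos]
    exact o.strictMono hij
  · intro y hy
    have : y ∈ Set.range o := by
      rw [Finset.range_orderEmbOfFin]; exact hy
    obtain ⟨i, hi⟩ := this
    exact ⟨i, i.2, by simp [hi]⟩
  · rw [Finset.sum_range]
    simp only [Fin.is_lt, dif_pos, Fin.eta]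
    rw [← Finset.map_orderEmbOfFin_univ F hF, Finset.sum_map]
    rfl

lemma gs_primitive (d : ℤ → ℝ) : ∃ P : ℤ → ℝ, ∀ n, P (n+1) - P n = d n := by
  refine ⟨fun n => ∑ k ∈ Finset.Ico 0 n, d k - ∑ k ∈ Finset.Ico n 0, d k, ?_⟩
  intro n
  rcases le_or_gt 0 n with h | h
  · have e1 : Finset.Ico 0 (n+1) = insert n (Finset.Ico 0 n) := by ext x; simp; omega
    have e2 : Finset.Ico (n+1) 0 = ∅ := by ext x; simp; omega
    have e3 : Finset.Ico n 0 = ∅ := by ext x; simp; omega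
    simp only [e1, e2, e3]
    rw [Finset.sum_insert (by simp)]
    simp
  · have e1 : Finset.Ico n 0 = insert n (Finset.Ico (n+1) 0) := by ext x; simp; omega
    have e2 : Finset.Ico 0 n = ∅ := by ext x; simp; omega
    have e3 : Finset.Ico 0 (n+1) = ∅ := by ext x; simp; omega
    simp only [e1, e2, e3]
    rw [Finset.sum_insert (by simp)]
    simp

lemma gs_lipschitz (Q : ℤ → ℝ) (B : ℝ) (h : ∀ n, |Q (n+1) - Q n| ≤ B) (m n : ℤ) :
    |Q n - Q m| ≤ B * |(n : ℝ) - m| := by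
  have key : ∀ m n : ℤ, m ≤ n → |Q n - Q m| ≤ B * ((n : ℝ) - m) := by
    intro m n hmn
    induction n, hmn using Int.leInduction with
    | base => simp
    | succ n hn ih =>
      have h1 : |Q (n+1) - Q m| ≤ |Q (n+1) - Q n| + |Q n - Q m| := abs_sub_le _ _ _
      have := h n
      push_cast
      linarith
  rcases le_total m n with hmn | hmn
  · have h' : (m : ℝ) ≤ n := by exact_mod_cast hmn
    rw [abs_of_nonneg (sub_nonneg.mpr h')]
    exact key m n hmn
  · have h' : (n : ℝ) ≤ m := by exact_mod_cast hmn
    rw [abs_sub_comm, abs_sub_comm (n : ℝ), abs_of_nonneg (sub_nonneg.mpr h')]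
    exact key n m hmn

lemma gs_construct (Λ : Set ℝ) (hsep : IsSeparatedSet Λ) (hdens : upperBeurlingDensity Λ < 1) :
    ∃ (lam P : ℤ → ℝ) (ε D C0 : ℝ), 0 < ε ∧
      (∀ m n : ℤ, m ≤ n → ε * (n - m) ≤ lam n - lam m) ∧
      (∀ n : ℤ, |lam n - n| ≤ D) ∧
      (∀ n : ℤ, P (n+1) - P n = lam n - n) ∧
      (∀ m n : ℤ, |P n - P m| ≤ |(n : ℝ) - m| / 4 + C0) ∧ Λ ⊆ Set.range lam := by
  obtain ⟨θ, hθ0, hθ1, R, hR⟩ := gs_density Λ hsep hdens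
  obtain ⟨ε, hε, hs⟩ := hsep
  obtain ⟨N0, hN0⟩ := exists_nat_ge (max R 1)
  have hN01 : (1 : ℝ) ≤ N0 := (le_max_right _ _).trans hN0
  have hN0pos : 0 < N0 := by
    have : (0 : ℝ) < N0 := by linarith
    exact_mod_cast this
  obtain ⟨L, hL⟩ := exists_nat_ge ((θ * N0 + 1) / (1 - θ))
  rw [div_le_iff₀ (by linarith)] at hL
  have hLpos : 0 < L := by
    rcases Nat.eq_zero_or_pos L with h | h
    · rw [h] at hL
      have : 0 < θ * N0 := by positivity
      simp at hL; linarith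
    · exact h
  obtain ⟨N, hN⟩ : ∃ N, N = L * N0 := ⟨_, rfl⟩
  have hNpos : 0 < N := by rw [hN]; positivity
  have hNposR : (0 : ℝ) < N := by exact_mod_cast hNpos
  have hNR : (N : ℝ) = L * N0 := by rw [hN]; push_cast; ring
  have hNL : (L : ℝ) ≤ N := by rw [hNR]; nlinarith [(Nat.cast_nonneg L : (0:ℝ) ≤ L)]
  have hblock := fun m : ℤ => gs_block Λ (fun x r => (gs_count Λ ε hε hs x r).1) θ hθ1 N0 L N hN0pos
    hLpos hN (by nlinarith) (fun r hr => hR r ((le_max_left _ _).trans (hN0.trans hr))) ((m : ℝ) * N)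
  choose F hFcard hFmem hFΛ hFsum hFsep using hblock
  choose g hgmem hgmono hgsurj hgsum using fun m => gs_enum (F m) N (hFcard m)
  set ρ : ℝ := 1 / (32 * (N : ℝ)) with hρ
  have hρpos : 0 < ρ := by positivity
  have hNZ : (0 : ℤ) < N := by exact_mod_cast hNpos
  -- global separation
  have hglob : ∀ m m' : ℤ, ∀ x ∈ F m, ∀ y ∈ F m', x ≠ y → min ε ρ ≤ |x - y| := by
    intro m m' x hx y hy hxy
    by_cases hxΛ : x ∈ Λ
    · by_cases hyΛ : y ∈ Λ
      · exact (min_le_left _ _).trans (hs x hxΛ y hyΛ hxy)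
      · rw [abs_sub_comm]
        exact (min_le_right _ _).trans ((hFsep m' y hy hyΛ).1 x hxΛ)
    · by_cases hyΛ : y ∈ Λ
      · exact (min_le_right _ _).trans ((hFsep m x hx hxΛ).1 y hyΛ)
      · refine (min_le_right _ _).trans ?_
        obtain ⟨-, hx1, hx2, hx3⟩ := hFsep m x hx hxΛ
        obtain ⟨-, hy1, hy2, hy3⟩ := hFsep m' y hy hyΛ
        rcases lt_trichotomy m m' with h | h | h
        · have h' : (m : ℝ) + 1 ≤ m' := by exact_mod_cast h
          have : ((m : ℝ) + 1) * N ≤ m' * N := by gcongr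
          rw [abs_sub_comm]
          refine le_trans ?_ (le_abs_self _)
          linarith
        · subst h
          exact hx1 y hy hyΛ hxy.symm
        · have h' : (m' : ℝ) + 1 ≤ m := by exact_mod_cast h
          have : ((m' : ℝ) + 1) * N ≤ m * N := by gcongr
          refine le_trans ?_ (le_abs_self _)
          linarith
  set lam : ℤ → ℝ := fun n => g (n / N) (n % N).toNat with hlam
  have hmod : ∀ n : ℤ, (n % N).toNat < N := by
    intro n
    have h1 := Int.emod_nonneg n hNZ.ne'
    have h2 := Int.emod_lt_of_pos n hNZ
    omega
  have hlamF : ∀ n : ℤ, lam n ∈ F (n / N) := fun n => hgmem _ _ (hmod n)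
  have hlamblock : ∀ n : ℤ, ((n / N : ℤ) : ℝ) * N ≤ lam n ∧ lam n < ((n / N : ℤ) : ℝ) * N + N :=
    fun n => hFmem _ _ (hlamF n)
  have hnblock : ∀ n : ℤ, ((n / N : ℤ) : ℝ) * N ≤ n ∧ (n : ℝ) < ((n / N : ℤ) : ℝ) * N + N := by
    intro n
    have h1 := Int.emod_nonneg n hNZ.ne'
    have h2 := Int.emod_lt_of_pos n hNZ
    have h3 := Int.mul_ediv_add_emod n N
    constructor
    · have : n / N * N ≤ n := by nlinarith
      exact_mod_cast this
    · have : n < n / N * N + N := by nlinarith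
      exact_mod_cast this
  have hstep : ∀ n : ℤ, lam n < lam (n+1) := by
    intro n
    have hle : n / N ≤ (n+1) / N := Int.ediv_le_ediv hNZ (by omega)
    rcases hle.lt_or_eq with h | h
    · have h' : ((n / N : ℤ) : ℝ) + 1 ≤ (((n+1) / N : ℤ) : ℝ) := by exact_mod_cast h
      have : (((n / N : ℤ) : ℝ) + 1) * N ≤ (((n+1) / N : ℤ) : ℝ) * N := by gcongr
      linarith [(hlamblock n).2, (hlamblock (n+1)).1]
    · simp only [hlam]
      rw [← h]
      apply hgmono _ _ _ _ (hmod (n+1))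
      have h1 := Int.emod_nonneg n hNZ.ne'
      have h3 := Int.mul_ediv_add_emod n N
      have h4 := Int.mul_ediv_add_emod (n+1) N
      rw [← h] at h4
      omega
  have hgapstep : ∀ n : ℤ, min ε ρ ≤ lam (n+1) - lam n := by
    intro n
    have h1 := hstep n
    have := hglob _ _ _ (hlamF (n+1)) _ (hlamF n) h1.ne'
    rwa [abs_of_pos (by linarith)] at this
  have hD : ∀ n : ℤ, |lam n - n| ≤ N := by
    intro n
    rw [abs_le]
    constructor <;> linarith [(hlamblock n).1, (hlamblock n).2, (hnblock n).1, (hnblock n).2]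
  obtain ⟨P, hP⟩ := gs_primitive (fun n => lam n - n)
  refine ⟨lam, P, min ε ρ, N, 2 * N ^ 2 + N / 8, lt_min hε hρpos, ?_, hD, hP, ?_, ?_⟩
  · intro m n hmn
    induction n, hmn using Int.leInduction with
    | base => simp
    | succ n hn ih =>
      have := hgapstep n
      push_cast
      linarith
  · have hP1 : ∀ n, |P (n+1) - P n| ≤ N := by
      intro n; rw [hP]; exact hD n
    have hblk : ∀ m : ℤ, |P ((m+1) * N) - P (m * N)| ≤ N / 8 := by
      intro m
      have htel : ∀ M : ℕ, P (m * N + M) - P (m * N)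
          = ∑ i ∈ Finset.range M, (lam (m * N + i) - ((m : ℝ) * N + i)) := by
        intro M
        induction M with
        | zero => simp
        | succ M ih =>
          rw [Finset.sum_range_succ, ← ih]
          have := hP (m * N + M)
          push_cast at this ⊢
          rw [← add_assoc]
          linarith
      have h1 := htel N
      have h2 : ∑ i ∈ Finset.range N, (lam (m * N + i) - ((m : ℝ) * N + i))
          = ∑ y ∈ F m, (y - m * N) - (N : ℝ) * (N - 1) / 2 := by
        have e1 : ∀ i ∈ Finset.range N, lam (m * N + i) = g m i := by
          intro i hi
          have hi' := Finset.mem_range.mp hi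
          have d1 : (m * N + i : ℤ) / N = m := by
            rw [add_comm, Int.add_mul_ediv_right _ _ hNZ.ne', Int.ediv_eq_zero_of_lt (by omega) (by omega)]
            simp
          have d2 : (m * N + i : ℤ) % N = i := by
            rw [add_comm, Int.add_mul_emod_self_right, Int.emod_eq_of_lt (by omega) (by omega)]
          simp only [hlam, d1, d2, Int.toNat_natCast]
        have e2 : ∀ M : ℕ, ∑ i ∈ Finset.range M, ((m : ℝ) * N + i) = M * (m * N) + (M : ℝ) * (M - 1) / 2 := by
          intro M
          induction M with
          | zero => simp
          | succ M ih => rw [Finset.sum_range_succ, ih]; push_cast; ring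
        rw [Finset.sum_sub_distrib, Finset.sum_congr rfl e1, hgsum, e2, Finset.sum_sub_distrib,
          Finset.sum_const, hFcard, nsmul_eq_mul]
        ring
      have h3 : (m + 1) * (N : ℤ) = m * N + N := by ring
      rw [h3, h1, h2]
      exact hFsum m
    intro m n
    have l1 := gs_lipschitz (fun m => P (m * N)) (N / 8) hblk (m / N) (n / N)
    have hnear : ∀ n : ℤ, |P n - P (n / N * N)| ≤ N ^ 2 := by
      intro n
      have := gs_lipschitz P N hP1 (n / N * N) n
      have hb := hnblock n
      push_cast at this hb
      rw [abs_of_nonneg (a := (n : ℝ) - _) (by linarith)] at this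
      refine this.trans ?_
      rw [sq]
      gcongr
      linarith
    have l2 := hnear n
    have l3 := hnear m
    have l4 : |P n - P m| ≤ |P n - P (n / N * N)| + |P (n / N * N) - P (m / N * N)| + |P m - P (m / N * N)| := by
      rw [abs_sub_comm (P m)]
      exact (abs_sub_le _ (P (m / N * N)) _).trans (by gcongr; exact abs_sub_le _ _ _)
    have l5 : N * |((n / N : ℤ) : ℝ) - ((m / N : ℤ) : ℝ)| ≤ |(n : ℝ) - m| + N := by
      rw [← abs_of_pos hNposR, ← abs_mul, abs_of_pos hNposR]
      have a1 := hnblock n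
      have a2 := hnblock m
      have a3 := le_abs_self ((n : ℝ) - m)
      have a4 := neg_abs_le ((n : ℝ) - m)
      rw [abs_le]
      constructor <;> nlinarith
    have l6 := abs_nonneg ((n : ℝ) - m)
    nlinarith
  · intro x hx
    set m := ⌊x / N⌋ with hm
    have h1 : (m : ℝ) * N ≤ x := by
      have := Int.floor_le (x / N)
      rwa [le_div_iff₀ hNposR] at this
    have h2 : x < (m : ℝ) * N + N := by
      have := Int.lt_floor_add_one (x / N)
      rw [div_lt_iff₀ hNposR] at this
      linarith
    obtain ⟨i, hi, hgi⟩ := hgsurj m x (hFΛ m x hx h1 h2)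
    refine ⟨m * N + i, ?_⟩
    have d1 : (m * N + i : ℤ) / N = m := by
      rw [add_comm, Int.add_mul_ediv_right _ _ hNZ.ne', Int.ediv_eq_zero_of_lt (by omega) (by omega)]
      simp
    have d2 : (m * N + i : ℤ) % N = i := by
      rw [add_comm, Int.add_mul_emod_self_right, Int.emod_eq_of_lt (by omega) (by omega)]
    simp only [hlam, d1, d2, Int.toNat_natCast]
    exact hgi

/-- every separated `Λ ⊂ ℝ` with `D⁺(Λ) < 1` is interpolating for `V²_a`
and can be enlarged to a complete interpolating sequence for `V²_a`. -/
theorem statement3 (a : ℝ) (ha : 0 < a) (Λ : Set ℝ)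
    (hsep : IsSeparatedSet Λ) (hdens : upperBeurlingDensity Λ < 1) :
    IsInterpolatingV2 (a : ℂ) Λ ∧
      ∃ Λ' : Set ℝ, Λ ⊆ Λ' ∧ IsCompleteInterpolatingV2 (a : ℂ) Λ' := by
  obtain ⟨lam, P, ε, D, C0, hε, h1, h2, h3, h4, hsub⟩ := gs_construct Λ hsep hdens
  have hC := gs_CIS a ha lam P ε hε D C0 h1 h2 h3 h4
  exact ⟨gs_interp_mono _ _ _ hsub hC.2, Set.range lam, hsub, hC⟩
end

section
/- Let a > 0. If a sequence Λ ⊂ ℝ is interpolating for the Gaussian shift-invariant space V²_a, then Λ is separated and its upper Beurling density satisfies D⁺(Λ) ≤ 1. -/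
open Filter MeasureTheory

lemma gauss_le (a : ℝ) (ha : 0 < a) (u : ℝ) :
    Real.exp (-a * u ^ 2) ≤ Real.exp (1 / a) * Real.exp (-2 * |u|) := by
  rw [← Real.exp_add]
  apply Real.exp_le_exp.mpr
  have h : 0 ≤ a * (|u| - 1 / a) ^ 2 := by positivity
  have h2 : a * (|u| - 1 / a) ^ 2 = a * |u| ^ 2 - 2 * |u| + 1 / a := by
    field_simp
    ring
  rw [sq_abs] at h2
  linarith

lemma summable_exp_abs (ε : ℝ) (hε : 0 < ε) :
    Summable (fun k : ℤ => Real.exp (-ε * |(k : ℝ)|)) := by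
  have h : Summable (fun n : ℕ => Real.exp (-ε * |((n : ℤ) : ℝ)|)) := by
    have := Real.summable_exp_nat_mul_iff.mpr (show -ε < 0 by linarith)
    refine this.congr fun n => ?_
    rw [Int.cast_natCast, abs_of_nonneg (Nat.cast_nonneg n), mul_comm]
  have h' : Summable (fun n : ℕ => Real.exp (-ε * |((-(n : ℤ) : ℤ) : ℝ)|)) := by
    refine h.congr fun n => ?_
    rw [Int.cast_neg, abs_neg]
  exact summable_int_iff_summable_nat_and_neg.mpr ⟨h, h'⟩

lemma sep_sum (ε : ℝ) (hε : 0 < ε) : ∃ B > 0, ∀ (y : ℝ) (ι : Type) (p : ι → ℝ) (s : Finset ι),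
    (∀ i ∈ s, ∀ j ∈ s, i ≠ j → ε ≤ |p i - p j|) →
    ∑ i ∈ s, Real.exp (-|p i - y|) ≤ B := by
  classical
  have hs := summable_exp_abs ε hε
  refine ⟨Real.exp ε * ∑' k : ℤ, Real.exp (-ε * |(k : ℝ)|), ?_, ?_⟩
  · exact mul_pos (Real.exp_pos _) (hs.tsum_pos (fun _ => (Real.exp_pos _).le) 0 (Real.exp_pos _))
  intro y ι p s hsep
  set κ : ι → ℤ := fun i => ⌊(p i - y) / ε⌋ with hκ
  have hlo : ∀ i, (κ i : ℝ) * ε ≤ p i - y := fun i => by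
    have := Int.floor_le ((p i - y) / ε)
    rwa [le_div_iff₀ hε] at this
  have hhi : ∀ i, p i - y < ((κ i : ℝ) + 1) * ε := fun i => by
    have := Int.lt_floor_add_one ((p i - y) / ε)
    rwa [div_lt_iff₀ hε] at this
  have hinj : Set.InjOn κ s := by
    intro i hi j hj hij
    by_contra hne
    have h := hsep i hi j hj hne
    have h1 := hlo i
    have h2 := hhi i
    have h3 := hlo j
    have h4 := hhi j
    rw [hij] at h1 h2
    have : |p i - p j| < ε := by
      rw [abs_lt]
      constructor <;> nlinarith
    linarith
  have hterm : ∀ i, Real.exp (-|p i - y|) ≤ Real.exp ε * Real.exp (-ε * |(κ i : ℝ)|) := fun i => by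
    rw [← Real.exp_add]
    apply Real.exp_le_exp.mpr
    have h1 := hlo i
    have h2 := hhi i
    have h3 : |(κ i : ℝ) * ε| ≤ |p i - y| + ε := by
      rw [abs_le]
      constructor
      · have := neg_abs_le (p i - y)
        nlinarith
      · have := le_abs_self (p i - y)
        nlinarith
    rw [abs_mul, abs_of_pos hε] at h3
    nlinarith
  calc ∑ i ∈ s, Real.exp (-|p i - y|) ≤ ∑ i ∈ s, Real.exp ε * Real.exp (-ε * |(κ i : ℝ)|) :=
        Finset.sum_le_sum fun i _ => hterm i
    _ = Real.exp ε * ∑ k ∈ s.image κ, Real.exp (-ε * |(k : ℝ)|) := by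
        rw [Finset.sum_image hinj, Finset.mul_sum]
    _ ≤ _ := by
        gcongr
        exact hs.sum_le_tsum _ (fun _ _ => (Real.exp_pos _).le)

lemma int_sum : ∃ B > 0, ∀ y : ℝ, Summable (fun n : ℤ => Real.exp (-|(n : ℝ) - y|)) ∧
    ∑' n : ℤ, Real.exp (-|(n : ℝ) - y|) ≤ B := by
  obtain ⟨B, hB, h⟩ := sep_sum 1 one_pos
  refine ⟨B, hB, fun y => ?_⟩
  have hh : ∀ s : Finset ℤ, ∑ n ∈ s, Real.exp (-|(n : ℝ) - y|) ≤ B := fun s => by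
    refine h y ℤ (fun n => (n : ℝ)) s ?_
    intro i _ j _ hij
    have : (1 : ℤ) ≤ |i - j| := Int.one_le_abs (sub_ne_zero.mpr hij)
    exact_mod_cast this
  have hs := summable_of_sum_le (fun n : ℤ => (Real.exp_pos (-|(n : ℝ) - y|)).le) hh
  exact ⟨hs, hs.tsum_le_of_sum_le hh⟩

lemma gauss_summable (a : ℝ) (ha : 0 < a) (x : ℝ) :
    Summable (fun n : ℤ => Real.exp (-a * (x - n) ^ 2) ^ 2) := by
  obtain ⟨B, hB, h⟩ := int_sum
  refine Summable.of_nonneg_of_le (fun _ => by positivity) (fun n => ?_)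
    ((h x).1.mul_left (Real.exp (1 / a) ^ 2))
  have h1 := gauss_le a ha (x - n)
  calc _ ≤ (Real.exp (1 / a) * Real.exp (-2 * |x - n|)) ^ 2 := by gcongr
    _ = Real.exp (1 / a) ^ 2 * Real.exp (-4 * |x - n|) := by
      rw [mul_pow, ← Real.exp_nat_mul _ 2, ← Real.exp_nat_mul _ 2]
      congr 2
      push_cast
      ring
    _ ≤ _ := by
      rw [abs_sub_comm x]
      gcongr
      have := abs_nonneg ((n : ℝ) - x)
      linarith

/-- Square summable sequences. -/
abbrev L2 (ι : Type) : Type := ↥(lp (fun _ : ι => ℂ) 2)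

/-- The reproducing vector of point evaluation. -/
noncomputable def gk (a : ℝ) (ha : 0 < a) (x : ℝ) : L2 ℤ :=
  ⟨fun n => ((Real.exp (-a * (x - n) ^ 2) : ℝ) : ℂ), by
    apply memℓp_gen
    refine (gauss_summable a ha x).congr fun n => ?_
    rw [Complex.norm_real, Real.norm_eq_abs, abs_of_pos (Real.exp_pos _)]
    norm_num⟩

lemma gk_inner (a : ℝ) (ha : 0 < a) (x : ℝ) (c : L2 ℤ) :
    inner ℂ (gk a ha x) c = gaussShiftSum (a : ℂ) c x := by
  rw [lp.inner_eq_tsum]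
  unfold gaussShiftSum gk
  congr 1
  ext n
  simp only [RCLike.inner_apply, Complex.conj_ofReal]
  push_cast
  rfl

lemma l2_norm_sq {ι : Type} (f : L2 ι) : ‖f‖ ^ 2 = ∑' i, ‖f i‖ ^ 2 := by
  have := lp.norm_rpow_eq_tsum (p := 2) (by norm_num) f
  simpa using this

lemma riesz (a : ℝ) (ha : 0 < a) (Λ : Set ℝ) (hint : IsInterpolatingV2 (a : ℂ) Λ) :
    ∃ C > 0, ∀ F : Finset ℝ, (↑F ⊆ Λ) → ∀ b : ℝ → ℝ,
      ∑ x ∈ F, b x ^ 2 ≤ C * ∑' n : ℤ, (∑ x ∈ F, b x * Real.exp (-a * (x - n) ^ 2)) ^ 2 := by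
  classical
  let T : Λ → (L2 ℤ × L2 Λ →L[ℂ] ℂ) := fun l =>
    (innerSL ℂ (gk a ha l)).comp (ContinuousLinearMap.fst ℂ (L2 ℤ) (L2 Λ)) -
      (lp.evalCLM ℂ (fun _ : Λ => ℂ) 2 l).comp (ContinuousLinearMap.snd ℂ (L2 ℤ) (L2 Λ))
  let G : Submodule ℂ (L2 ℤ × L2 Λ) := ⨅ l, (T l).ker
  have hG : ∀ p : L2 ℤ × L2 Λ, p ∈ G ↔ ∀ l : Λ, gaussShiftSum (a : ℂ) p.1 l = p.2 l := by
    intro p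
    simp only [G, Submodule.mem_iInf]
    refine forall_congr' fun l => ?_
    rw [← gk_inner a ha]
    simp [T, sub_eq_zero]
    rfl
  have hcl : IsClosed (G : Set (L2 ℤ × L2 Λ)) := by
    simp only [G, Submodule.coe_iInf]
    exact isClosed_iInter fun l => (T l).isClosed_ker
  have : CompleteSpace G := hcl.completeSpace_coe
  let P : G →L[ℂ] L2 Λ := (ContinuousLinearMap.snd ℂ (L2 ℤ) (L2 Λ)).comp G.subtypeL
  have hsurj : Function.Surjective P := by
    intro y
    obtain ⟨c, hc, hcy⟩ := hint y (by
      have := (memℓp_gen_iff (p := 2) (by norm_num)).mp y.2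
      simpa using this)
    have hm : Memℓp c 2 := by
      apply memℓp_gen
      simpa using hc
    exact ⟨⟨(⟨c, hm⟩, y), (hG _).mpr hcy⟩, rfl⟩
  obtain ⟨C, hC, hP⟩ := P.exists_preimage_norm_le hsurj
  refine ⟨C ^ 2, by positivity, fun F hF b => ?_⟩
  set S := ∑ x ∈ F, b x ^ 2 with hS
  have hSnn : 0 ≤ S := Finset.sum_nonneg fun _ _ => sq_nonneg _
  let yf : Λ → ℂ := fun l => if (l : ℝ) ∈ F then (b l : ℂ) else 0
  have hyS : HasSum (fun l : Λ => ‖yf l‖ ^ 2) S := by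
    have h1 : HasSum (fun x : ℝ => if x ∈ F then b x ^ 2 else 0) S := by
      have := hasSum_sum_of_ne_finset_zero (L := SummationFilter.unconditional ℝ) (s := F)
        (f := fun x : ℝ => if x ∈ F then b x ^ 2 else 0)
        (fun x hx => by simp [hx])
      convert this using 1
      exact Finset.sum_congr rfl fun x hx => by simp [hx]
    have h2 := (hasSum_subtype_iff_of_support_subset (s := Λ) (a := S)
      (f := fun x : ℝ => if x ∈ F then b x ^ 2 else 0) (by
        intro x hx
        by_contra hxn
        have : x ∉ F := fun h => hxn (hF h)
        simp [this] at hx)).mpr h1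
    convert h2 using 2 with l
    simp only [yf, Function.comp]
    split_ifs <;> simp
  let y : L2 Λ := ⟨yf, by
    apply memℓp_gen
    simpa using hyS.summable⟩
  have hyn : ‖y‖ ^ 2 = S := by
    rw [l2_norm_sq]
    exact hyS.tsum_eq
  obtain ⟨g, hg, hgn⟩ := hP y
  have hgG := (hG _).mp g.2
  let c : L2 ℤ := (g : L2 ℤ × L2 Λ).1
  have hcn : ‖c‖ ≤ C * ‖y‖ := (norm_fst_le (g : L2 ℤ × L2 Λ)).trans hgn
  have hval : ∀ x ∈ F, inner ℂ (gk a ha x) c = (b x : ℂ) := by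
    intro x hx
    rw [gk_inner]
    have h := hgG ⟨x, hF hx⟩
    have h2 : (g : L2 ℤ × L2 Λ).2 = y := hg
    rw [h2] at h
    refine h.trans ?_
    simp [y, yf, hx]
  let d : L2 ℤ := ∑ x ∈ F, (b x : ℂ) • gk a ha x
  have hd : inner ℂ d c = (S : ℂ) := by
    simp only [d, sum_inner, inner_smul_left, hS]
    push_cast
    refine Finset.sum_congr rfl fun x hx => ?_
    rw [hval x hx]
    simp [sq]
  have hdn : ‖d‖ ^ 2 = ∑' n : ℤ, (∑ x ∈ F, b x * Real.exp (-a * (x - n) ^ 2)) ^ 2 := by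
    rw [l2_norm_sq]
    congr 1
    ext n
    have : d n = ((∑ x ∈ F, b x * Real.exp (-a * (x - n) ^ 2) : ℝ) : ℂ) := by
      simp only [d, lp.coeFn_sum, Finset.sum_apply, lp.coeFn_smul, Pi.smul_apply, smul_eq_mul, gk]
      push_cast
      rfl
    rw [this, Complex.norm_real, Real.norm_eq_abs, sq_abs]
  rw [← hdn]
  have h1 : S ≤ ‖d‖ * ‖c‖ := by
    have := norm_inner_le_norm (𝕜 := ℂ) d c
    rw [hd, Complex.norm_real, Real.norm_eq_abs] at this
    exact (le_abs_self S).trans this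
  have h2 : S ≤ ‖d‖ * (C * ‖y‖) := h1.trans (by gcongr)
  have h3 : ‖y‖ ≤ C * ‖d‖ := by
    rcases (norm_nonneg y).eq_or_lt with h | h
    · rw [← h]; positivity
    · nlinarith
  rw [← hyn, ← mul_pow]
  gcongr

lemma gauss_sub_le (a : ℝ) (ha : 0 < a) (u v : ℝ) (huv : |u - v| ≤ 1) :
    |Real.exp (-a * u ^ 2) - Real.exp (-a * v ^ 2)| ≤
      2 * a * Real.exp (1 / a) * |u - v| * (Real.exp (-|u|) + Real.exp (-|v|)) := by
  have key : ∀ s t : ℝ, |Real.exp s - Real.exp t| ≤ |s - t| * (Real.exp s + Real.exp t) := by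
    have : ∀ s t : ℝ, Real.exp s - Real.exp t ≤ |s - t| * (Real.exp s + Real.exp t) := by
      intro s t
      have h1 : 1 - Real.exp (t - s) ≤ s - t := by
        have := Real.add_one_le_exp (t - s)
        linarith
      have h2 : Real.exp s - Real.exp t = Real.exp s * (1 - Real.exp (t - s)) := by
        rw [mul_sub, ← Real.exp_add]
        ring_nf
      rw [h2]
      have h3 := Real.exp_pos s
      have h4 := Real.exp_pos t
      have h5 := le_abs_self (s - t)
      have h6 := abs_nonneg (s - t)
      nlinarith [mul_nonneg h6 h4.le, mul_le_mul_of_nonneg_left (h1.trans h5) h3.le]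
    intro s t
    rw [abs_le]
    constructor
    · have := this t s
      rw [abs_sub_comm t s] at this
      linarith
    · exact this s t
  have hb : ∀ w : ℝ, (2 * |w| + 1) * Real.exp (-a * w ^ 2) ≤
      2 * Real.exp (1 / a) * Real.exp (-|w|) := by
    intro w
    have h1 := gauss_le a ha w
    have h2 : 2 * |w| + 1 ≤ 2 * Real.exp |w| := by
      have := Real.add_one_le_exp |w|
      linarith
    calc _ ≤ (2 * Real.exp |w|) * (Real.exp (1 / a) * Real.exp (-2 * |w|)) := by
          gcongr
      _ = 2 * Real.exp (1 / a) * (Real.exp |w| * Real.exp (-2 * |w|)) := by ring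
      _ = _ := by
        rw [← Real.exp_add]
        ring_nf
  have h := key (-a * u ^ 2) (-a * v ^ 2)
  have he : |(-a * u ^ 2) - (-a * v ^ 2)| = a * |u - v| * |u + v| := by
    rw [show (-a * u ^ 2) - (-a * v ^ 2) = -(a * ((u - v) * (u + v))) by ring, abs_neg, abs_mul,
      abs_of_pos ha, abs_mul]
    ring
  have hu : |u + v| ≤ 2 * |u| + 1 := by
    have h1 : u + v = 2 * u - (u - v) := by ring
    have h2 := abs_sub (2 * u) (u - v)
    rw [← h1, abs_mul, abs_two] at h2
    linarith
  have hv : |u + v| ≤ 2 * |v| + 1 := by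
    have h1 : u + v = 2 * v + (u - v) := by ring
    have h2 := abs_add_le (2 * v) (u - v)
    rw [← h1, abs_mul, abs_two] at h2
    linarith
  refine h.trans ?_
  rw [he]
  have e1 : |u + v| * Real.exp (-a * u ^ 2) ≤ 2 * Real.exp (1 / a) * Real.exp (-|u|) :=
    (mul_le_mul_of_nonneg_right hu (Real.exp_pos _).le).trans (hb u)
  have e2 : |u + v| * Real.exp (-a * v ^ 2) ≤ 2 * Real.exp (1 / a) * Real.exp (-|v|) :=
    (mul_le_mul_of_nonneg_right hv (Real.exp_pos _).le).trans (hb v)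
  have hn : 0 ≤ a * |u - v| := by positivity
  calc _ = a * |u - v| * (|u + v| * Real.exp (-a * u ^ 2) + |u + v| * Real.exp (-a * v ^ 2)) := by
        ring
    _ ≤ a * |u - v| * (2 * Real.exp (1 / a) * Real.exp (-|u|) +
        2 * Real.exp (1 / a) * Real.exp (-|v|)) := by gcongr
    _ = _ := by ring

lemma separated_of_riesz (a : ℝ) (ha : 0 < a) (Λ : Set ℝ) (C : ℝ) (hC : 0 < C)
    (h : ∀ F : Finset ℝ, (↑F ⊆ Λ) → ∀ b : ℝ → ℝ,
      ∑ x ∈ F, b x ^ 2 ≤ C * ∑' n : ℤ, (∑ x ∈ F, b x * Real.exp (-a * (x - n) ^ 2)) ^ 2) :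
    IsSeparatedSet Λ := by
  classical
  obtain ⟨B, hB, hBs⟩ := int_sum
  set K := 2 * a * Real.exp (1 / a) with hK
  have hK0 : 0 < K := by positivity
  set q := 1 / (2 * C * K ^ 2 * B) with hq
  have hq0 : 0 < q := by positivity
  refine ⟨min 1 (Real.sqrt q), lt_min one_pos (Real.sqrt_pos.mpr hq0), fun x hx y hy hxy => ?_⟩
  by_contra! hlt
  have h1 : |x - y| ≤ 1 := (hlt.trans_le (min_le_left _ _)).le
  have h2 : |x - y| < Real.sqrt q := hlt.trans_le (min_le_right _ _)
  have h3 : |x - y| ^ 2 < q := by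
    rwa [Real.lt_sqrt (abs_nonneg _)] at h2
  have hr := h {x, y} (by
    intro z hz
    simp at hz
    rcases hz with rfl | rfl <;> assumption) (fun z => if z = x then 1 else -1)
  rw [Finset.sum_pair hxy] at hr
  simp only [Finset.sum_pair hxy, if_true, if_neg hxy.symm] at hr
  have hpt : ∀ n : ℤ, (1 * Real.exp (-a * (x - n) ^ 2) + -1 * Real.exp (-a * (y - n) ^ 2)) ^ 2 ≤
      2 * K ^ 2 * |x - y| ^ 2 * (Real.exp (-|(n : ℝ) - x|) + Real.exp (-|(n : ℝ) - y|)) := by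
    intro n
    have h4 := gauss_sub_le a ha (x - n) (y - n) (by simpa using h1)
    rw [show x - (n : ℝ) - (y - n) = x - y by ring, abs_sub_comm x n, abs_sub_comm y n] at h4
    have e1 : Real.exp (-|(n : ℝ) - x|) ≤ 1 := Real.exp_le_one_iff.mpr (by simp)
    have e2 : Real.exp (-|(n : ℝ) - y|) ≤ 1 := Real.exp_le_one_iff.mpr (by simp)
    have p1 := Real.exp_pos (-|(n : ℝ) - x|)
    have p2 := Real.exp_pos (-|(n : ℝ) - y|)
    set s := Real.exp (-|(n : ℝ) - x|) + Real.exp (-|(n : ℝ) - y|) with hs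
    calc _ = |Real.exp (-a * (x - n) ^ 2) - Real.exp (-a * (y - n) ^ 2)| ^ 2 := by
          rw [sq_abs]; ring
      _ ≤ (K * |x - y| * s) ^ 2 := by gcongr
      _ = K ^ 2 * |x - y| ^ 2 * (s * s) := by ring
      _ ≤ K ^ 2 * |x - y| ^ 2 * (2 * s) := by
          have : s ≤ 2 := by linarith
          have : 0 ≤ s := by linarith
          gcongr
      _ = _ := by ring
  have hsum := ((hBs x).1.add (hBs y).1).mul_left (2 * K ^ 2 * |x - y| ^ 2)
  have ht := Summable.tsum_le_tsum hpt
    (Summable.of_nonneg_of_le (fun _ => sq_nonneg _) hpt hsum) hsum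
  rw [tsum_mul_left, (hBs x).1.tsum_add (hBs y).1] at ht
  have hB2 : ∑' n : ℤ, Real.exp (-|(n : ℝ) - x|) + ∑' n : ℤ, Real.exp (-|(n : ℝ) - y|) ≤ 2 * B := by
    linarith [(hBs x).2, (hBs y).2]
  have hfin : (2 : ℝ) ≤ C * (2 * K ^ 2 * |x - y| ^ 2 * (2 * B)) := by
    calc (2 : ℝ) = 1 ^ 2 + (-1) ^ 2 := by norm_num
      _ ≤ _ := hr
      _ ≤ _ := by
        apply mul_le_mul_of_nonneg_left _ hC.le
        refine ht.trans ?_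
        gcongr
  rw [hq, lt_div_iff₀ (by positivity)] at h3
  nlinarith

lemma card_of_riesz (a : ℝ) (ha : 0 < a) (Λ : Set ℝ) (C : ℝ) (hC : 0 < C)
    (h : ∀ F : Finset ℝ, (↑F ⊆ Λ) → ∀ b : ℝ → ℝ,
      ∑ x ∈ F, b x ^ 2 ≤ C * ∑' n : ℤ, (∑ x ∈ F, b x * Real.exp (-a * (x - n) ^ 2)) ^ 2)
    (hsep : IsSeparatedSet Λ) :
    ∃ R > 0, ∀ x r : ℝ, 0 ≤ r → ∀ F : Finset ℝ, ((F : Set ℝ) ⊆ Λ ∩ Set.Icc x (x + r)) →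
      (F.card : ℝ) ≤ r + 2 * R + 1 := by
  classical
  obtain ⟨B, hB, hBs⟩ := int_sum
  obtain ⟨ε, hε, hsep⟩ := hsep
  obtain ⟨A, hA, hAs⟩ := sep_sum ε hε
  set K := Real.exp (1 / a) ^ 2 with hK
  have hK0 : 0 < K := by positivity
  obtain ⟨R, hR0, hR⟩ : ∃ R : ℝ, 0 < R ∧ C * (K * A * (2 * B)) * Real.exp (-R) < 1 := by
    have ht : Tendsto (fun R : ℝ => C * (K * A * (2 * B)) * Real.exp (-R)) atTop (nhds 0) := by
      simpa using (Real.tendsto_exp_neg_atTop_nhds_zero).const_mul (C * (K * A * (2 * B)))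
    exact ((eventually_gt_atTop 0).and (ht.eventually_lt_const one_pos)).exists
  refine ⟨R, hR0, fun x r hr F hF => ?_⟩
  set M : Finset ℤ := Finset.Icc ⌈x - R⌉ ⌊x + r + R⌋ with hM
  have hMc : (M.card : ℝ) ≤ r + 2 * R + 1 := by
    rw [hM, Int.card_Icc]
    have h1 := Int.floor_le (x + r + R)
    have h2 := Int.le_ceil (x - R)
    have h3 : (((⌊x + r + R⌋ + 1 - ⌈x - R⌉).toNat : ℤ) : ℝ) =
        ((max (⌊x + r + R⌋ + 1 - ⌈x - R⌉) 0 : ℤ) : ℝ) := by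
      rw [Int.toNat_eq_max]
    rw [Int.cast_natCast] at h3
    rw [h3]
    push_cast
    apply max_le <;> linarith
  refine le_trans ?_ hMc
  by_contra! hlt
  have hlt : M.card < F.card := by exact_mod_cast hlt
  let L : (F → ℝ) →ₗ[ℝ] (M → ℝ) :=
    Matrix.mulVecLin (Matrix.of fun (n : M) (l : F) => Real.exp (-a * ((l : ℝ) - (n : ℤ)) ^ 2))
  have hker : L.ker ≠ ⊥ := LinearMap.ker_ne_bot_of_finrank_lt (by simpa using hlt)
  obtain ⟨b, hbk, hb0⟩ := Submodule.exists_mem_ne_zero_of_ne_bot hker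
  let b' : ℝ → ℝ := fun z => if hz : z ∈ F then b ⟨z, hz⟩ else 0
  have hb' : ∀ z : F, b' z = b z := fun z => by simp [b']
  set S := ∑ z ∈ F, b' z ^ 2 with hS
  have hSpos : 0 < S := by
    obtain ⟨i, hi⟩ := Function.ne_iff.mp hb0
    refine Finset.sum_pos' (fun _ _ => sq_nonneg _) ⟨i, i.2, ?_⟩
    rw [hb']
    have : b i ≠ 0 := hi
    positivity
  have hzero : ∀ n ∈ M, ∑ z ∈ F, b' z * Real.exp (-a * (z - n) ^ 2) = 0 := by
    intro n hn
    have h1 : L b ⟨n, hn⟩ = 0 := by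
      rw [LinearMap.mem_ker.mp hbk]; rfl
    rw [← Finset.sum_coe_sort, ← h1]
    simp only [L, Matrix.mulVecLin_apply, Matrix.mulVec, dotProduct, Matrix.of_apply]
    refine Finset.sum_congr rfl fun z _ => ?_
    rw [hb', mul_comm]
  have hFA : ∀ y, ∑ z ∈ F, Real.exp (-|z - y|) ≤ A := fun y =>
    hAs y ℝ id F (fun i hi j hj hij => hsep i (hF hi).1 j (hF hj).1 hij)
  have hpt : ∀ n : ℤ, (∑ z ∈ F, b' z * Real.exp (-a * (z - n) ^ 2)) ^ 2 ≤
      S * (K * Real.exp (-R) * A) *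
        (Real.exp (-|(n : ℝ) - x|) + Real.exp (-|(n : ℝ) - (x + r)|)) := by
    intro n
    by_cases hn : n ∈ M
    · rw [hzero n hn, zero_pow two_ne_zero]
      positivity
    have hn' : (n : ℝ) < x - R ∨ x + r + R < n := by
      by_contra! hcon
      exact hn (Finset.mem_Icc.mpr ⟨Int.ceil_le.mpr hcon.1, Int.le_floor.mpr hcon.2⟩)
    have hg : ∀ z ∈ F, Real.exp (-a * (z - n) ^ 2) ^ 2 ≤
        K * Real.exp (-R) * (Real.exp (-|(n : ℝ) - x|) * Real.exp (-|z - x|) +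
          Real.exp (-|(n : ℝ) - (x + r)|) * Real.exp (-|z - (x + r)|)) := by
      intro z hz
      obtain ⟨hz1, hz2⟩ := (hF hz).2
      have h1 : Real.exp (-a * (z - n) ^ 2) ^ 2 ≤ K * Real.exp (-2 * |z - n|) := by
        calc _ ≤ (Real.exp (1 / a) * Real.exp (-2 * |z - n|)) ^ 2 := by
              gcongr
              exact gauss_le a ha _
          _ = K * (Real.exp (-2 * |z - n|) * Real.exp (-2 * |z - n|)) := by ring
          _ ≤ K * (Real.exp (-2 * |z - n|) * 1) := by
              gcongr
              exact Real.exp_le_one_iff.mpr (by linarith [abs_nonneg (z - n)])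
          _ = _ := by ring
      refine h1.trans ?_
      rw [mul_assoc]
      gcongr
      rw [mul_add, ← Real.exp_add, ← Real.exp_add, ← Real.exp_add, ← Real.exp_add]
      rcases hn' with hn' | hn'
      · refine le_trans ?_ (le_add_of_nonneg_right (Real.exp_pos _).le)
        apply Real.exp_le_exp.mpr
        rw [abs_of_nonneg (by linarith : 0 ≤ z - n), abs_of_nonpos (by linarith : (n : ℝ) - x ≤ 0),
          abs_of_nonneg (by linarith : 0 ≤ z - x)]
        linarith
      · refine le_trans ?_ (le_add_of_nonneg_left (Real.exp_pos _).le)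
        apply Real.exp_le_exp.mpr
        rw [abs_of_nonpos (by linarith : z - n ≤ 0),
          abs_of_nonneg (by linarith : 0 ≤ (n : ℝ) - (x + r)),
          abs_of_nonpos (by linarith : z - (x + r) ≤ 0)]
        linarith
    calc _ ≤ S * ∑ z ∈ F, Real.exp (-a * (z - n) ^ 2) ^ 2 := Finset.sum_mul_sq_le_sq_mul_sq _ _ _
      _ ≤ S * ∑ z ∈ F, K * Real.exp (-R) * (Real.exp (-|(n : ℝ) - x|) * Real.exp (-|z - x|) +
          Real.exp (-|(n : ℝ) - (x + r)|) * Real.exp (-|z - (x + r)|)) := by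
          gcongr with z hz
          exact hg z hz
      _ = S * (K * Real.exp (-R) * (Real.exp (-|(n : ℝ) - x|) * ∑ z ∈ F, Real.exp (-|z - x|) +
          Real.exp (-|(n : ℝ) - (x + r)|) * ∑ z ∈ F, Real.exp (-|z - (x + r)|))) := by
          rw [← Finset.mul_sum, Finset.sum_add_distrib, Finset.mul_sum, Finset.mul_sum]
      _ ≤ S * (K * Real.exp (-R) * (Real.exp (-|(n : ℝ) - x|) * A +
          Real.exp (-|(n : ℝ) - (x + r)|) * A)) := by
          gcongr
          · exact hFA x
          · exact hFA (x + r)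
      _ = _ := by ring
  have hsum := ((hBs x).1.add (hBs (x + r)).1).mul_left (S * (K * Real.exp (-R) * A))
  have ht := Summable.tsum_le_tsum hpt
    (Summable.of_nonneg_of_le (fun _ => sq_nonneg _) hpt hsum) hsum
  rw [tsum_mul_left, (hBs x).1.tsum_add (hBs (x + r)).1] at ht
  have hB2 : ∑' n : ℤ, Real.exp (-|(n : ℝ) - x|) +
      ∑' n : ℤ, Real.exp (-|(n : ℝ) - (x + r)|) ≤ 2 * B := by
    linarith [(hBs x).2, (hBs (x + r)).2]
  have hr1 := h F (fun z hz => (hF hz).1) b'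
  have hfin : S ≤ C * (S * (K * Real.exp (-R) * A) * (2 * B)) := by
    refine hr1.trans (mul_le_mul_of_nonneg_left (ht.trans ?_) hC.le)
    gcongr
  nlinarith

/-- if `Λ` is interpolating for `V²_a` then `Λ` is separated and
`D⁺(Λ) ≤ 1`. -/
theorem statement4 (a : ℝ) (ha : 0 < a) (Λ : Set ℝ)
    (hint : IsInterpolatingV2 (a : ℂ) Λ) :
    IsSeparatedSet Λ ∧ upperBeurlingDensity Λ ≤ 1 := by
  obtain ⟨C, hC, h⟩ := riesz a ha Λ hint
  have hsep := separated_of_riesz a ha Λ C hC h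
  refine ⟨hsep, ?_⟩
  obtain ⟨R, hR, hcard⟩ := card_of_riesz a ha Λ C hC h hsep
  have hn : ∀ x r : ℝ, 0 ≤ r → ((Λ ∩ Set.Icc x (x + r)).ncard : ℝ) ≤ r + 2 * R + 1 := by
    intro x r hr
    by_cases hf : (Λ ∩ Set.Icc x (x + r)).Finite
    · rw [Set.ncard_eq_toFinset_card _ hf]
      exact hcard x r hr _ (by simp)
    · rw [Set.Infinite.ncard hf]
      push_cast
      linarith
  have hle : ∀ᶠ r : ℝ in atTop, (⨆ x : ℝ, ((Λ ∩ Set.Icc x (x + r)).ncard : ℝ)) / r ≤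
      1 + (2 * R + 1) / r := by
    filter_upwards [eventually_gt_atTop 0] with r hr
    have h1 : (⨆ x : ℝ, ((Λ ∩ Set.Icc x (x + r)).ncard : ℝ)) ≤ r + 2 * R + 1 :=
      ciSup_le fun x => hn x r hr.le
    rw [div_le_iff₀ hr]
    field_simp
    linarith
  have hlim : Tendsto (fun r : ℝ => 1 + (2 * R + 1) / r) atTop (nhds 1) := by
    simpa using (tendsto_const_nhds (x := (1 : ℝ))).add
      ((tendsto_const_nhds (x := 2 * R + 1)).div_atTop tendsto_id)
  unfold upperBeurlingDensity
  rw [← hlim.limsup_eq]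
  refine limsup_le_limsup hle ?_ hlim.isBoundedUnder_le
  refine IsBoundedUnder.isCoboundedUnder_le ⟨0, ?_⟩
  rw [eventually_map]
  filter_upwards [eventually_gt_atTop 0] with r hr
  exact div_nonneg (Real.iSup_nonneg fun x => Nat.cast_nonneg _) hr.le
end

section
/- Let c ∈ ℂ with Re c > 0, and let (δ_n)_{n∈ℤ} be a sequence of real numbers such that |δ_n| ≤ δ for all n ∈ ℤ, for some constant δ < 1/2. Then Λ = {n + δ_n : n ∈ ℤ} is a complete interpolating sequence for the Gaussian shift-invariant space V²_c. -/
open Filter MeasureTheory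

lemma schur_test (g : ℤ → ℝ) (hg0 : ∀ j, 0 ≤ g j) (hg : Summable g) (K : ℤ → ℤ → ℂ)
    (hK : ∀ m k, ‖K m k‖ ≤ g (m - k)) (x : ℤ → ℂ) (hx : Summable fun k => ‖x k‖ ^ 2) :
    (∀ m, Summable fun k => x k * K m k) ∧ Summable (fun m => ‖∑' k, x k * K m k‖ ^ 2) ∧
      ∑' m, ‖∑' k, x k * K m k‖ ^ 2 ≤ (∑' j, g j) ^ 2 * ∑' k, ‖x k‖ ^ 2 := by
  have hP : Summable (fun p : ℤ × ℤ => g p.1 * ‖x p.2‖ ^ 2) :=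
    hg.mul_of_nonneg hx hg0 (fun k => by positivity)
  let e : ℤ × ℤ ≃ ℤ × ℤ :=
    { toFun := fun p => (p.1 - p.2, p.2)
      invFun := fun p => (p.1 + p.2, p.2)
      left_inv := fun p => by simp
      right_inv := fun p => by simp }
  have hP' : Summable (fun p : ℤ × ℤ => g (p.1 - p.2) * ‖x p.2‖ ^ 2) :=
    (e.summable_iff (f := fun p : ℤ × ℤ => g p.1 * ‖x p.2‖ ^ 2)).2 hP
  have hPt : ∑' p : ℤ × ℤ, g (p.1 - p.2) * ‖x p.2‖ ^ 2 = (∑' j, g j) * ∑' k, ‖x k‖ ^ 2 := by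
    rw [hg.tsum_mul_tsum hx hP]
    exact e.tsum_eq (fun p : ℤ × ℤ => g p.1 * ‖x p.2‖ ^ 2)
  have hm : ∀ m, Summable fun k => g (m - k) * ‖x k‖ ^ 2 := fun m => hP'.prod_factor m
  have hgm : ∀ m, Summable fun k => g (m - k) := fun m =>
    ((Equiv.subLeft m).summable_iff (f := g)).2 hg
  have hgmt : ∀ m, ∑' k, g (m - k) = ∑' j, g j := fun m => (Equiv.subLeft m).tsum_eq g
  have hG0 : 0 ≤ ∑' j, g j := tsum_nonneg hg0
  set G := ∑' j, g j with hG
  have hh0 : ∀ m, 0 ≤ ∑' k, g (m - k) * ‖x k‖ ^ 2 := fun m =>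
    tsum_nonneg fun k => mul_nonneg (hg0 _) (by positivity)
  have hcs : ∀ m (s : Finset ℤ), ∑ k ∈ s, ‖x k * K m k‖ ≤
      Real.sqrt (G * ∑' k, g (m - k) * ‖x k‖ ^ 2) := by
    intro m s
    have h1 : ∑ k ∈ s, ‖x k * K m k‖ ≤ ∑ k ∈ s, g (m - k) * ‖x k‖ := by
      refine Finset.sum_le_sum fun k _ => ?_
      rw [norm_mul, mul_comm]
      exact mul_le_mul_of_nonneg_right (hK m k) (norm_nonneg _)
    refine h1.trans (Real.le_sqrt_of_sq_le ?_)
    have h2 := Finset.sum_sq_le_sum_mul_sum_of_sq_le_mul s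
      (r := fun k => g (m - k) * ‖x k‖) (f := fun k => g (m - k))
      (g := fun k => g (m - k) * ‖x k‖ ^ 2) (fun k _ => hg0 _)
      (fun k _ => mul_nonneg (hg0 _) (by positivity)) (fun k _ => le_of_eq (by ring))
    refine h2.trans (mul_le_mul ?_ ?_ ?_ hG0)
    · rw [← hgmt m]; exact (hgm m).sum_le_tsum s (fun k _ => hg0 _)
    · exact (hm m).sum_le_tsum s (fun k _ => mul_nonneg (hg0 _) (by positivity))
    · exact Finset.sum_nonneg fun k _ => mul_nonneg (hg0 _) (by positivity)
  have hs : ∀ m, Summable fun k => ‖x k * K m k‖ := fun m =>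
    summable_of_sum_le (fun k => norm_nonneg _) (hcs m)
  have hb : ∀ m, ‖∑' k, x k * K m k‖ ^ 2 ≤ G * ∑' k, g (m - k) * ‖x k‖ ^ 2 := by
    intro m
    have h1 : ‖∑' k, x k * K m k‖ ≤ Real.sqrt (G * ∑' k, g (m - k) * ‖x k‖ ^ 2) :=
      (norm_tsum_le_tsum_norm (hs m)).trans ((hs m).tsum_le_of_sum_le (hcs m))
    calc _ ≤ (Real.sqrt (G * ∑' k, g (m - k) * ‖x k‖ ^ 2)) ^ 2 := by gcongr
      _ = _ := Real.sq_sqrt (mul_nonneg hG0 (hh0 m))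
  have hS : Summable fun m => G * ∑' k, g (m - k) * ‖x k‖ ^ 2 := (hP'.prod).mul_left G
  have hS1 : Summable (fun m => ‖∑' k, x k * K m k‖ ^ 2) :=
    Summable.of_nonneg_of_le (fun m => by positivity) hb hS
  refine ⟨fun m => (hs m).of_norm, hS1, ?_⟩
  refine (hS1.tsum_le_tsum hb hS).trans (le_of_eq ?_)
  rw [tsum_mul_left, ← hP'.tsum_prod, hPt]; ring

noncomputable abbrev L2Z := lp (fun _ : ℤ => ℂ) 2

lemma memL2Z_iff (x : ℤ → ℂ) : Memℓp (E := fun _ : ℤ => ℂ) x 2 ↔ Summable fun k => ‖x k‖ ^ 2 := by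
  rw [memℓp_gen_iff (by norm_num)]
  simp

lemma summable_L2Z (x : L2Z) : Summable fun k => ‖x k‖ ^ 2 := (memL2Z_iff _).1 x.2

lemma norm_sq_L2Z (x : L2Z) : ‖x‖ ^ 2 = ∑' k, ‖x k‖ ^ 2 := by
  have := lp.norm_rpow_eq_tsum (p := 2) (by norm_num) x
  simpa using this

lemma exists_clm (g : ℤ → ℝ) (hg0 : ∀ j, 0 ≤ g j) (hg : Summable g) (K : ℤ → ℤ → ℂ)
    (hK : ∀ m k, ‖K m k‖ ≤ g (m - k)) :
    ∃ T : L2Z →L[ℂ] L2Z, (∀ x m, T x m = ∑' k, x k * K m k) ∧ ‖T‖ ≤ ∑' j, g j := by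
  have key := fun x : L2Z => schur_test g hg0 hg K hK x (summable_L2Z x)
  have hG0 : 0 ≤ ∑' j, g j := tsum_nonneg hg0
  let T0 : L2Z →ₗ[ℂ] L2Z :=
    { toFun := fun x => ⟨fun m => ∑' k, x k * K m k, (memL2Z_iff _).2 (key x).2.1⟩
      map_add' := by
        intro x y
        ext m
        have := ((key x).1 m).tsum_add ((key y).1 m)
        simp only [lp.coeFn_add, Pi.add_apply, add_mul]
        exact this
      map_smul' := by
        intro a x
        ext m
        simp only [lp.coeFn_smul, Pi.smul_apply, smul_eq_mul, mul_assoc, RingHom.id_apply]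
        exact tsum_mul_left }
  refine ⟨T0.mkContinuous _ (fun x => ?_), fun x m => rfl, T0.mkContinuous_norm_le hG0 _⟩
  refine le_of_sq_le_sq ?_ (by positivity)
  rw [mul_pow, norm_sq_L2Z, norm_sq_L2Z]
  exact (key x).2.2

lemma lower_bound (g : ℤ → ℝ) (hg0 : ∀ j, 0 ≤ g j) (hg : Summable g) (A : ℤ → ℤ → ℂ)
    (B : ℕ → ℤ → ℤ → ℂ) (hB : ∀ N m k, ‖B N m k‖ ≤ g (m - k))
    (hBA : ∀ (N : ℕ) (k l : ℤ), |l| ≤ N → ∑' n, A n l * B N k n = if k = l then 1 else 0)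
    (T : L2Z →L[ℂ] L2Z) (hT : ∀ x m, T x m = ∑' k, x k * A m k) (x : L2Z) :
    ‖x‖ ≤ (∑' j, g j) * ‖T x‖ := by
  choose S hS hSn using fun N => exists_clm g hg0 hg (B N) (hB N)
  have hG0 : 0 ≤ ∑' j, g j := tsum_nonneg hg0
  have hTe : ∀ (l : ℤ) (a : ℂ) n, T (lp.single 2 l a) n = a * A n l := by
    intro l a n
    rw [hT, tsum_eq_single l]
    · simp
    · intro k hk; simp [lp.single_apply, hk]
  have hSe : ∀ (N : ℕ) (l : ℤ) (a : ℂ), |l| ≤ N → S N (T (lp.single 2 l a)) = lp.single 2 l a := by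
    intro N l a hl
    ext k
    rw [hS]
    simp only [hTe, mul_assoc]
    rw [tsum_mul_left, hBA N k l hl]
    by_cases h : k = l
    · subst h; simp
    · simp [h, lp.single_apply]
  have hsum := lp.hasSum_single (p := 2) (by norm_num) x
  have hfin : ∀ s : Finset ℤ, ‖∑ l ∈ s, lp.single 2 l (x l)‖ ≤
      (∑' j, g j) * ‖T (∑ l ∈ s, lp.single 2 l (x l))‖ := by
    intro s
    obtain ⟨N, hN⟩ : ∃ N : ℕ, ∀ l ∈ s, |l| ≤ N := by
      refine ⟨∑ l ∈ s, l.natAbs, fun l hl => ?_⟩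
      rw [Int.abs_eq_natAbs]
      exact_mod_cast Finset.single_le_sum (f := fun l : ℤ => l.natAbs) (fun _ _ => Nat.zero_le _) hl
    have h1 : S N (T (∑ l ∈ s, lp.single 2 l (x l))) = ∑ l ∈ s, lp.single 2 l (x l) := by
      simp only [map_sum]
      exact Finset.sum_congr rfl fun l hl => hSe N l _ (hN l hl)
    calc _ = ‖S N (T (∑ l ∈ s, lp.single 2 l (x l)))‖ := by rw [h1]
      _ ≤ ‖S N‖ * _ := (S N).le_opNorm _
      _ ≤ _ := by gcongr; exact hSn N
  refine le_of_tendsto_of_tendsto' (f := fun s : Finset ℤ => ‖∑ l ∈ s, lp.single 2 l (x l)‖)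
    hsum.norm ?_ hfin
  exact (((T.continuous.tendsto x).comp hsum).norm).const_mul _

lemma surj_of_bounds (A : ℤ → ℤ → ℂ) (T T' : L2Z →L[ℂ] L2Z)
    (hT : ∀ x m, T x m = ∑' k, x k * A m k) (hT' : ∀ x m, T' x m = ∑' k, x k * A k m)
    (C C' : ℝ) (hC : 0 ≤ C) (h : ∀ x, ‖x‖ ≤ C * ‖T x‖) (h' : ∀ x, ‖x‖ ≤ C' * ‖T' x‖) :
    Function.Surjective T := by
  have hanti : AntilipschitzWith C.toNNReal T :=
    T.antilipschitz_of_bound (fun x => by rw [Real.coe_toNNReal _ hC]; exact h x)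
  have hcl : IsClosed (T.range : Set L2Z) := by
    have := hanti.isClosed_range T.uniformContinuous
    rw [LinearMap.coe_range]
    exact this
  have : CompleteSpace T.range := hcl.completeSpace_coe
  rw [← ContinuousLinearMap.coe_coe, ← LinearMap.range_eq_top, ← Submodule.orthogonal_eq_bot_iff,
    Submodule.eq_bot_iff]
  intro y hy
  rw [Submodule.mem_orthogonal] at hy
  have hys : Summable fun k => ‖(starRingEnd ℂ) (y k)‖ ^ 2 := by
    simpa using summable_L2Z y
  let w : L2Z := ⟨fun k => (starRingEnd ℂ) (y k), (memL2Z_iff _).2 hys⟩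
  have hw : T' w = 0 := by
    ext k
    rw [hT']
    have h1 := hy (T (lp.single 2 k 1)) ⟨_, rfl⟩
    rw [lp.inner_eq_tsum] at h1
    have h2 : ∀ n, T (lp.single 2 k 1) n = A n k := by
      intro n
      rw [hT, tsum_eq_single k]
      · simp
      · intro l hl; simp [lp.single_apply, hl]
    simp only [h2] at h1
    have h3 := congrArg (starRingEnd ℂ) h1
    rw [Complex.conj_tsum] at h3
    simpa [w, mul_comm] using h3
  have hw0 : w = 0 := by
    have := h' w
    rw [hw, norm_zero, mul_zero] at this
    exact norm_le_zero_iff.1 this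
  ext k
  have := congrArg (fun v : L2Z => v k) hw0
  simpa [w] using this


lemma coeff_prod_bound (S : Finset ℤ) (z : ℤ → ℂ) (s : ℝ) (hs : 0 < s) (j : ℕ) :
    ‖(∏ m ∈ S, (Polynomial.X - Polynomial.C (z m))).coeff j‖ * s ^ j ≤ ∏ m ∈ S, (s + ‖z m‖) := by
  classical
  induction S using Finset.induction_on generalizing j with
  | empty =>
    rcases j with _ | j
    · simp
    · simp [Polynomial.coeff_one]
  | insert m S hm ih =>
    rw [Finset.prod_insert hm, Finset.prod_insert hm, sub_mul]
    have hz := mul_le_mul_of_nonneg_left (ih j) (norm_nonneg (z m))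
    rcases j with _ | j
    · simp only [Polynomial.coeff_sub, Polynomial.mul_coeff_zero, Polynomial.coeff_X_zero, zero_mul,
        zero_sub, norm_neg, Polynomial.coeff_C_zero, norm_mul, pow_zero, mul_one] at hz ⊢
      have : 0 ≤ s * ∏ m ∈ S, (s + ‖z m‖) := by positivity
      linarith
    · have h1 := mul_le_mul_of_nonneg_left (ih j) hs.le
      rw [Polynomial.coeff_sub, Polynomial.coeff_X_mul, Polynomial.coeff_C_mul]
      set P := ∏ m ∈ S, (Polynomial.X - Polynomial.C (z m))
      calc _ ≤ (‖P.coeff j‖ + ‖z m‖ * ‖P.coeff (j+1)‖) * s ^ (j+1) := by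
              gcongr
              refine (norm_sub_le _ _).trans ?_
              rw [norm_mul]
        _ = s * (‖P.coeff j‖ * s ^ j) + ‖z m‖ * (‖P.coeff (j+1)‖ * s ^ (j+1)) := by ring
        _ ≤ _ := by linarith

lemma summable_expAbs (ε : ℝ) (hε : 0 < ε) : Summable fun j : ℤ => Real.exp (-ε * |(j : ℝ)|) := by
  have h : Summable fun n : ℕ => Real.exp (-ε * n) := by
    have := summable_geometric_of_lt_one (Real.exp_pos (-ε)).le (by simpa using hε)
    refine this.congr fun n => ?_
    rw [← Real.exp_nat_mul]; ring_nf
  refine Summable.of_nat_of_neg ?_ ?_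
  · simpa using h
  · simpa using h

section
variable (δ : ℤ → ℝ) (d : ℝ) 

lemma lam_sep (hδ : ∀ n : ℤ, |δ n| ≤ d) (k m : ℤ) (hkm : k ≤ m) :
    (1 - 2 * d) * |(k : ℝ) - m| ≤ (m + δ m) - (k + δ k) := by
  have h1 := abs_le.1 (hδ k)
  have h2 := abs_le.1 (hδ m)
  rcases hkm.eq_or_lt with h | h
  · subst h; simp
  · have h3 : (k : ℝ) + 1 ≤ m := by exact_mod_cast h
    have : |(k : ℝ) - m| = m - k := by rw [abs_of_neg (by linarith)]; ring
    rw [this]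
    nlinarith

lemma lam_mono (hd : d < 1 / 2) (hδ : ∀ n : ℤ, |δ n| ≤ d) (k m : ℤ) (hkm : k ≤ m) :
    (k + δ k) ≤ (m + δ m) := by
  have := lam_sep δ d hδ k m hkm
  have h2 : 0 ≤ (1 - 2 * d) * |(k : ℝ) - m| := mul_nonneg (by linarith) (abs_nonneg _)
  linarith

noncomputable def Hfun (N : ℕ) (k : ℤ) : ℝ :=
  (k : ℝ) ^ 2 - 2 * (k + N) * (k + δ k)
    + 2 * ∑ m ∈ Finset.Icc (-(N : ℤ)) N, max ((k : ℝ) + δ k) (m + δ m)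

lemma Hfun_step (hd : d < 1 / 2) (hδ : ∀ n : ℤ, |δ n| ≤ d) (N : ℕ) (k : ℤ) (h1 : -(N : ℤ) ≤ k)
    (h2 : k ≤ N) : Hfun δ N (k + 1) = Hfun δ N k + 1 - 2 * δ k := by
  have hsum : ∑ m ∈ Finset.Icc (-(N : ℤ)) N, max (((k + 1 : ℤ) : ℝ) + δ (k + 1)) (m + δ m)
      = ∑ m ∈ Finset.Icc (-(N : ℤ)) N, max ((k : ℝ) + δ k) (m + δ m)
        + (k + N + 1) * (1 + δ (k + 1) - δ k) := by
    have hstep : ∀ m ∈ Finset.Icc (-(N : ℤ)) N, max (((k + 1 : ℤ) : ℝ) + δ (k + 1)) (m + δ m)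
        = max ((k : ℝ) + δ k) (m + δ m) + if m ≤ k then (1 + δ (k + 1) - δ k) else 0 := by
      intro m _
      split_ifs with h
      · rw [max_eq_left (lam_mono δ d hd hδ m k h),
          max_eq_left (lam_mono δ d hd hδ m (k + 1) (by omega))]
        push_cast; ring
      · rw [max_eq_right (lam_mono δ d hd hδ k m (by omega)),
          max_eq_right (lam_mono δ d hd hδ (k + 1) m (by omega))]
        ring
    rw [Finset.sum_congr rfl hstep, Finset.sum_add_distrib, ← Finset.sum_filter, Finset.sum_const]
    have : (Finset.Icc (-(N : ℤ)) N).filter (fun m => m ≤ k) = Finset.Icc (-(N : ℤ)) k := by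
      ext m; simp only [Finset.mem_filter, Finset.mem_Icc]; omega
    rw [this, Int.card_Icc, nsmul_eq_mul]
    congr 2
    have h3 : (((k + 1 - -(N : ℤ)).toNat : ℤ) : ℝ) = ((k + 1 - -(N : ℤ) : ℤ) : ℝ) := by
      rw [Int.toNat_of_nonneg (by omega)]
    rw [Int.cast_natCast] at h3
    rw [h3]; push_cast; ring
  unfold Hfun
  rw [hsum]
  push_cast
  ring

lemma Hfun_up (hd : d < 1 / 2) (hδ : ∀ n : ℤ, |δ n| ≤ d) (N : ℕ) (n : ℤ) (h1 : -(N : ℤ) ≤ n)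
    (k : ℤ) (hk : n ≤ k) : k ≤ N → 
    (1 - 2 * d) * (k - n) ≤ Hfun δ N k - Hfun δ N n ∧
    Hfun δ N k - 2 * (k + δ k) - (Hfun δ N n - 2 * (n + δ n)) ≤ - ((1 - 2 * d) * (k - n)) := by
  induction k, hk using Int.le_induction with
  | base => intro _; simp
  | succ k hk ih =>
    intro hkN
    obtain ⟨i1, i2⟩ := ih (by omega)
    rw [Hfun_step δ d hd hδ N k (by omega) (by omega)]
    have h3 := abs_le.1 (hδ k)
    have h4 := abs_le.1 (hδ (k + 1))
    push_cast
    constructor <;> nlinarith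

lemma Hfun_bound (hd : d < 1 / 2) (hδ : ∀ n : ℤ, |δ n| ≤ d) (N : ℕ) (k n : ℤ)
    (hn1 : -(N : ℤ) ≤ n) (hn2 : n ≤ N) (hk1 : -(N : ℤ) ≤ k) (hk2 : k ≤ N) :
    Hfun δ N k - Hfun δ N n + 2 * (n + δ n) - 2 * max ((k : ℝ) + δ k) (n + δ n)
      ≤ - (1 - 2 * d) * |((k - n : ℤ) : ℝ)| := by
  push_cast
  rcases le_total n k with h | h
  · have := (Hfun_up δ d hd hδ N n hn1 k h hk2).2
    rw [max_eq_left (lam_mono δ d hd hδ n k h), abs_of_nonneg (by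
      have : (n : ℝ) ≤ k := by exact_mod_cast h
      linarith)]
    linarith
  · have := (Hfun_up δ d hd hδ N k hk1 n h hn2).1
    rw [max_eq_right (lam_mono δ d hd hδ k n h), abs_of_nonpos (by
      have : (k : ℝ) ≤ n := by exact_mod_cast h
      linarith)]
    linarith

lemma factor_upper (a : ℝ) (ha : 0 < a) (hd : d < 1 / 2) (hδ : ∀ n : ℤ, |δ n| ≤ d) (k m : ℤ) :
    Real.exp (2 * a * (k + δ k)) + Real.exp (2 * a * (m + δ m)) ≤
      Real.exp (2 * a * max ((k : ℝ) + δ k) (m + δ m)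
        + Real.exp (-(a * (1 - 2 * d)) * |((k - m : ℤ) : ℝ)|)) := by
  wlog h : k ≤ m generalizing k m
  · have := this m k (by omega)
    rw [add_comm, max_comm]
    have e : |((k - m : ℤ) : ℝ)| = |((m - k : ℤ) : ℝ)| := by push_cast; exact abs_sub_comm _ _
    rw [e]; exact this
  rw [max_eq_right (lam_mono δ d hd hδ k m h), Real.exp_add]
  have hs := lam_sep δ d hδ k m h
  have hp : 0 ≤ (1 - 2 * d) * |(k : ℝ) - m| := mul_nonneg (by linarith) (abs_nonneg _)
  have h1 := Real.add_one_le_exp (Real.exp (-(a * (1 - 2 * d)) * |((k - m : ℤ) : ℝ)|))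
  have h2 : Real.exp (2 * a * (k + δ k)) ≤ Real.exp (2 * a * (m + δ m)) *
      Real.exp (-(a * (1 - 2 * d)) * |((k - m : ℤ) : ℝ)|) := by
    rw [← Real.exp_add]
    apply Real.exp_le_exp.2
    push_cast
    nlinarith
  have h3 := mul_le_mul_of_nonneg_left h1 (Real.exp_pos (2 * a * (m + δ m))).le
  linarith

lemma factor_lower (a : ℝ) (ha : 0 < a) (hd : d < 1 / 2) (hδ : ∀ n : ℤ, |δ n| ≤ d) (k m : ℤ)
    (hkm : k ≠ m) :
      Real.exp (2 * a * max ((k : ℝ) + δ k) (m + δ m)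
        - Real.exp (-(a * (1 - 2 * d)) * |((k - m : ℤ) : ℝ)|) / (1 - Real.exp (-(a * (1 - 2 * d)))))
      ≤ |Real.exp (2 * a * (k + δ k)) - Real.exp (2 * a * (m + δ m))| := by
  wlog h : k ≤ m generalizing k m
  · have := this m k hkm.symm (by omega)
    rw [abs_sub_comm, max_comm]
    have e : |((k - m : ℤ) : ℝ)| = |((m - k : ℤ) : ℝ)| := by push_cast; exact abs_sub_comm _ _
    rw [e]; exact this
  rw [max_eq_right (lam_mono δ d hd hδ k m h), Real.exp_sub]
  have hε : 0 < a * (1 - 2 * d) := mul_pos ha (by linarith)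
  have hs := lam_sep δ d hδ k m h
  have hp : 0 ≤ (1 - 2 * d) * |(k : ℝ) - m| := mul_nonneg (by linarith) (abs_nonneg _)
  have hab : 1 ≤ |((k - m : ℤ) : ℝ)| := by
    rw [← Int.cast_abs]
    exact_mod_cast Int.one_le_abs (sub_ne_zero.2 hkm)
  set x := Real.exp (-(a * (1 - 2 * d)) * |((k - m : ℤ) : ℝ)|) with hx
  set q := Real.exp (-(a * (1 - 2 * d))) with hq
  have hq1 : q < 1 := by rw [hq]; simpa using hε
  have hxq : x ≤ q := by
    apply Real.exp_le_exp.2; nlinarith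
  have hx0 : 0 < x := Real.exp_pos _
  have h2 : Real.exp (2 * a * (k + δ k)) ≤ Real.exp (2 * a * (m + δ m)) * x := by
    rw [hx, ← Real.exp_add]
    apply Real.exp_le_exp.2
    push_cast
    nlinarith
  have hM := Real.exp_pos (2 * a * (m + δ m))
  have h3 : Real.exp (2 * a * (m + δ m)) * (1 - x) ≤
      |Real.exp (2 * a * (k + δ k)) - Real.exp (2 * a * (m + δ m))| := by
    rw [abs_sub_comm]
    refine le_trans ?_ (le_abs_self _)
    linarith
  refine le_trans ?_ h3
  rw [div_eq_mul_inv]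
  refine mul_le_mul_of_nonneg_left ?_ hM.le
  have h4 : (1 - x)⁻¹ ≤ Real.exp (x / (1 - q)) := by
    have h5 : (1 - x)⁻¹ = x / (1 - x) + 1 := by
      field_simp [show 1 - x ≠ 0 by linarith]; ring
    rw [h5]
    refine (Real.add_one_le_exp _).trans (Real.exp_le_exp.2 ?_)
    exact div_le_div_of_nonneg_left hx0.le (by linarith) (by linarith)
  exact inv_le_of_inv_le₀ (by linarith) h4

noncomputable def zpt (c : ℂ) (n : ℤ) : ℂ := Complex.exp (2 * c * (((n : ℝ) + δ n : ℝ) : ℂ))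

noncomputable def Pn (c : ℂ) (N : ℕ) (n : ℤ) : Polynomial ℂ :=
  ∏ m ∈ (Finset.Icc (-(N : ℤ)) N).erase n, (Polynomial.X - Polynomial.C (zpt δ c m))

noncomputable def Bmat (c : ℂ) (N : ℕ) (k n : ℤ) : ℂ :=
  if k ∈ Finset.Icc (-(N : ℤ)) N ∧ n ∈ Finset.Icc (-(N : ℤ)) N then
    Complex.exp (c * (k : ℂ) ^ 2) * Complex.exp (c * (((n : ℝ) + δ n : ℝ) : ℂ) ^ 2)
      * zpt δ c n ^ N * (Pn δ c N n).coeff (k + N).toNat / (Pn δ c N n).eval (zpt δ c n)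
  else 0

noncomputable def Amat (c : ℂ) (n k : ℤ) : ℂ :=
  Complex.exp (-c * ((((n : ℝ) + δ n : ℝ) : ℂ) - (k : ℂ)) ^ 2)

lemma norm_zpt (c : ℂ) (n : ℤ) : ‖zpt δ c n‖ = Real.exp (2 * c.re * (n + δ n)) := by
  rw [zpt, Complex.norm_exp, Complex.re_mul_ofReal]
  simp

lemma Pn_eval (c : ℂ) (N : ℕ) (n : ℤ) (z : ℂ) : (Pn δ c N n).eval z =
    ∏ m ∈ (Finset.Icc (-(N : ℤ)) N).erase n, (z - zpt δ c m) := by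
  simp [Pn, Polynomial.eval_prod]

lemma Amat_bound (c : ℂ) (hc : 0 < c.re) (hd : d < 1 / 2) (hδ : ∀ n : ℤ, |δ n| ≤ d) (n k : ℤ) :
    ‖Amat δ c n k‖ ≤ Real.exp (-(c.re * (1 - 2 * d)) * |((n - k : ℤ) : ℝ)|) := by
  have e : Amat δ c n k = Complex.exp (-c * (((n + δ n - k) ^ 2 : ℝ) : ℂ)) := by
    simp [Amat]
  rw [e, Complex.norm_exp, Complex.re_mul_ofReal]
  apply Real.exp_le_exp.2
  rw [Complex.neg_re]
  have h : (1 - 2 * d) * |((n - k : ℤ) : ℝ)| ≤ (n + δ n - k : ℝ) ^ 2 := by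
    have hj : |((n - k : ℤ) : ℝ)| ≤ |((n - k : ℤ) : ℝ)| ^ 2 := by
      rw [← Int.cast_abs]
      norm_cast
      rcases (abs_nonneg (n - k)).eq_or_lt with h | h
      · rw [← h]; norm_num
      · nlinarith
    have h1 : -(|((n - k : ℤ) : ℝ)| * d) ≤ ((n - k : ℤ) : ℝ) * δ n := by
      have := neg_abs_le (((n - k : ℤ) : ℝ) * δ n)
      rw [abs_mul] at this
      have h2 := mul_le_mul_of_nonneg_left (hδ n) (abs_nonneg ((n - k : ℤ) : ℝ))
      linarith
    rw [sq_abs] at hj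
    have e2 : (n + δ n - k : ℝ) ^ 2 = ((n - k : ℤ) : ℝ) ^ 2 + 2 * (((n - k : ℤ) : ℝ) * δ n)
       + δ n ^ 2 := by push_cast; ring
    rw [e2]
    nlinarith [sq_nonneg (δ n)]
  nlinarith

lemma Pn_eval_lower (c : ℂ) (hc : 0 < c.re) (hd : d < 1 / 2) (hδ : ∀ n : ℤ, |δ n| ≤ d) (N : ℕ)
    (n : ℤ) :
    Real.exp (∑ m ∈ (Finset.Icc (-(N : ℤ)) N).erase n, (2 * c.re * max ((n : ℝ) + δ n) (m + δ m)
        - Real.exp (-(c.re * (1 - 2 * d)) * |((n - m : ℤ) : ℝ)|)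
          / (1 - Real.exp (-(c.re * (1 - 2 * d))))))
      ≤ ‖(Pn δ c N n).eval (zpt δ c n)‖ := by
  rw [Pn_eval, norm_prod, Real.exp_sum]
  refine Finset.prod_le_prod (fun _ _ => (Real.exp_pos _).le) fun m hm => ?_
  refine (factor_lower δ d c.re hc hd hδ n m (Finset.ne_of_mem_erase hm).symm).trans ?_
  rw [← norm_zpt, ← norm_zpt]
  exact abs_norm_sub_norm_le _ _

lemma Pn_coeff_upper (c : ℂ) (hc : 0 < c.re) (hd : d < 1 / 2) (hδ : ∀ n : ℤ, |δ n| ≤ d) (N : ℕ)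
    (k n : ℤ) (hk : -(N : ℤ) ≤ k) :
    ‖(Pn δ c N n).coeff (k + N).toNat‖ ≤
    Real.exp (∑ m ∈ (Finset.Icc (-(N : ℤ)) N).erase n, (2 * c.re * max ((k : ℝ) + δ k) (m + δ m)
        + Real.exp (-(c.re * (1 - 2 * d)) * |((k - m : ℤ) : ℝ)|))
        - (k + N) * (2 * c.re * (k + δ k))) := by
  have h := coeff_prod_bound ((Finset.Icc (-(N : ℤ)) N).erase n) (zpt δ c)
    (Real.exp (2 * c.re * (k + δ k))) (Real.exp_pos _) (k + N).toNat
  rw [← Real.exp_nat_mul] at h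
  have h3 : (((k + N).toNat : ℕ) : ℝ) = (k : ℝ) + N := by
    have : (((k + N).toNat : ℤ) : ℝ) = ((k + N : ℤ) : ℝ) := by
      rw [Int.toNat_of_nonneg (by omega)]
    rw [Int.cast_natCast] at this
    rw [this]; push_cast; ring
  rw [h3] at h
  rw [Real.exp_sub, le_div_iff₀ (Real.exp_pos _), Real.exp_sum]
  refine h.trans (Finset.prod_le_prod (fun _ _ => by positivity) fun m hm => ?_)
  rw [norm_zpt]
  exact factor_upper δ d c.re hc hd hδ k m

lemma Bmat_bound (c : ℂ) (hc : 0 < c.re) (hd : d < 1 / 2) (hδ : ∀ n : ℤ, |δ n| ≤ d) :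
    ∃ C : ℝ, 0 < C ∧ ∀ N k n, ‖Bmat δ c N k n‖ ≤
      C * Real.exp (-(c.re * (1 - 2 * d)) * |((k - n : ℤ) : ℝ)|) := by
  have hε : 0 < c.re * (1 - 2 * d) := mul_pos hc (by linarith)
  set ε := c.re * (1 - 2 * d) with hεd
  have hsum := summable_expAbs ε hε
  set Γ := ∑' j : ℤ, Real.exp (-ε * |(j : ℝ)|) with hΓ
  have hfin : ∀ (k : ℤ) (S : Finset ℤ), ∑ m ∈ S, Real.exp (-ε * |((k - m : ℤ) : ℝ)|) ≤ Γ := by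
    intro k S
    rw [hΓ, ← (Equiv.subLeft k).tsum_eq]
    exact Summable.sum_le_tsum (f := fun m : ℤ => Real.exp (-ε * |((k - m : ℤ) : ℝ)|)) S
      (fun _ _ => (Real.exp_pos _).le) ((Equiv.subLeft k).summable_iff.2 hsum)
  have hq1 : Real.exp (-ε) < 1 := by simpa using hε
  refine ⟨Real.exp (c.re * d ^ 2 + Γ + Γ / (1 - Real.exp (-ε))), Real.exp_pos _, fun N k n => ?_⟩
  unfold Bmat
  split_ifs with h
  swap
  · rw [norm_zero]; positivity
  obtain ⟨hk, hn⟩ := h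
  have hn' := hn
  rw [Finset.mem_Icc] at hk hn
  have hup := Pn_coeff_upper δ d c hc hd hδ N k n hk.1
  have hlo := Pn_eval_lower δ d c hc hd hδ N n
  have e1 : ‖Complex.exp (c * (k : ℂ) ^ 2)‖ = Real.exp (c.re * (k : ℝ) ^ 2) := by
    have : c * (k : ℂ) ^ 2 = c * (((k : ℝ) ^ 2 : ℝ) : ℂ) := by push_cast; ring
    rw [this, Complex.norm_exp, Complex.re_mul_ofReal]
  have e2 : ‖Complex.exp (c * (((n : ℝ) + δ n : ℝ) : ℂ) ^ 2)‖
      = Real.exp (c.re * (n + δ n) ^ 2) := by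
    rw [← Complex.ofReal_pow, Complex.norm_exp, Complex.re_mul_ofReal]
  rw [norm_div, norm_mul, norm_mul, norm_mul, norm_pow, e1, e2, norm_zpt, ← Real.exp_nat_mul,
    div_le_iff₀ (lt_of_lt_of_le (Real.exp_pos _) hlo)]
  refine (mul_le_mul_of_nonneg_left hup (by positivity)).trans
    (le_trans ?_ (mul_le_mul_of_nonneg_left hlo (by positivity)))
  simp only [← Real.exp_add]
  apply Real.exp_le_exp.2
  rw [Finset.sum_add_distrib, Finset.sum_sub_distrib, ← Finset.sum_div, ← Finset.mul_sum,
    ← Finset.mul_sum]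
  have f1 := hfin k ((Finset.Icc (-(N : ℤ)) N).erase n)
  have f2 : (∑ m ∈ (Finset.Icc (-(N : ℤ)) N).erase n, Real.exp (-ε * |((n - m : ℤ) : ℝ)|))
      / (1 - Real.exp (-ε)) ≤ Γ / (1 - Real.exp (-ε)) :=
    div_le_div_of_nonneg_right (hfin n _) (by linarith)
  have g1 := Finset.add_sum_erase (Finset.Icc (-(N : ℤ)) N)
    (fun m => max ((k : ℝ) + δ k) (m + δ m)) hn'
  have g2 := Finset.add_sum_erase (Finset.Icc (-(N : ℤ)) N)
    (fun m => max ((n : ℝ) + δ n) (m + δ m)) hn'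
  have hH := Hfun_bound δ d hd hδ N k n hn.1 hn.2 hk.1 hk.2
  unfold Hfun at hH
  have hdn : δ n ^ 2 ≤ d ^ 2 := by
    rw [← sq_abs]
    exact pow_le_pow_left₀ (abs_nonneg _) (hδ n) 2
  simp only [max_self] at g2
  rw [← g1, ← g2] at hH
  have hH' := mul_le_mul_of_nonneg_left hH hc.le
  have hdn' := mul_le_mul_of_nonneg_left hdn hc.le
  rw [hεd] at *
  nlinarith

lemma Bmat_zero (c : ℂ) (N : ℕ) (k n : ℤ)
    (h : ¬ (k ∈ Finset.Icc (-(N : ℤ)) N ∧ n ∈ Finset.Icc (-(N : ℤ)) N)) : Bmat δ c N k n = 0 :=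
  if_neg h

lemma AB_fin (c : ℂ) (hc : 0 < c.re) (hd : d < 1 / 2) (hδ : ∀ n : ℤ, |δ n| ≤ d) (N : ℕ) (m n : ℤ)
    (hm : m ∈ Finset.Icc (-(N : ℤ)) N) (hn : n ∈ Finset.Icc (-(N : ℤ)) N) :
    ∑ k ∈ Finset.Icc (-(N : ℤ)) N, Amat δ c m k * Bmat δ c N k n = if m = n then 1 else 0 := by
  have hD : (Pn δ c N n).eval (zpt δ c n) ≠ 0 := by
    have := lt_of_lt_of_le (Real.exp_pos _) (Pn_eval_lower δ d c hc hd hδ N n)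
    exact norm_pos_iff.1 this
  have hz : zpt δ c m ≠ 0 := Complex.exp_ne_zero _
  have hdeg : (Pn δ c N n).natDegree < 2 * N + 1 := by
    rw [Pn, Polynomial.natDegree_prod_of_monic _ _ (fun i _ => Polynomial.monic_X_sub_C _)]
    simp [Finset.card_erase_of_mem hn]
    omega
  have hterm : ∀ k ∈ Finset.Icc (-(N : ℤ)) N, Amat δ c m k * Bmat δ c N k n =
      (Complex.exp (-c * (((m : ℝ) + δ m : ℝ) : ℂ) ^ 2) *
        Complex.exp (c * (((n : ℝ) + δ n : ℝ) : ℂ) ^ 2) * zpt δ c n ^ N / zpt δ c m ^ N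
        / (Pn δ c N n).eval (zpt δ c n)) *
      ((Pn δ c N n).coeff (k + N).toNat * zpt δ c m ^ (k + N).toNat) := by
    intro k hk
    rw [Bmat, if_pos ⟨hk, hn⟩]
    rw [Finset.mem_Icc] at hk
    have key : Amat δ c m k * Complex.exp (c * (k : ℂ) ^ 2) =
        Complex.exp (-c * (((m : ℝ) + δ m : ℝ) : ℂ) ^ 2) / zpt δ c m ^ N
          * zpt δ c m ^ (k + N).toNat := by
      have h3 : (((k + N).toNat : ℕ) : ℂ) = (k : ℂ) + N := by
        have : (((k + N).toNat : ℤ) : ℂ) = ((k + N : ℤ) : ℂ) := by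
          rw [Int.toNat_of_nonneg (by omega)]
        rw [Int.cast_natCast] at this
        rw [this]; push_cast; ring
      rw [zpt, ← Complex.exp_nat_mul, ← Complex.exp_nat_mul, h3, Amat, ← Complex.exp_add,
        ← Complex.exp_sub, ← Complex.exp_add]
      congr 1
      ring
    calc _ = (Amat δ c m k * Complex.exp (c * (k : ℂ) ^ 2)) *
          (Complex.exp (c * (((n : ℝ) + δ n : ℝ) : ℂ) ^ 2)
      * zpt δ c n ^ N * (Pn δ c N n).coeff (k + N).toNat / (Pn δ c N n).eval (zpt δ c n)) := by ring
      _ = _ := by rw [key]; ring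
  rw [Finset.sum_congr rfl hterm, ← Finset.mul_sum]
  have hre : ∑ k ∈ Finset.Icc (-(N : ℤ)) N,
      ((Pn δ c N n).coeff (k + N).toNat * zpt δ c m ^ (k + N).toNat)
      = (Pn δ c N n).eval (zpt δ c m) := by
    rw [Polynomial.eval_eq_sum_range' hdeg]
    refine Finset.sum_nbij' (fun k => (k + N).toNat) (fun j => (j : ℤ) - N) ?_ ?_ ?_ ?_ ?_
    · intro k hk; simp only [Finset.mem_Icc, Finset.mem_range] at *; omega
    · intro k hk; simp only [Finset.mem_Icc, Finset.mem_range] at *; omega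
    · intro k hk; simp only [Finset.mem_Icc, Finset.mem_range] at *; omega
    · intro k hk; simp only [Finset.mem_Icc, Finset.mem_range] at *; omega
    · intro k hk; rfl
  rw [hre]
  split_ifs with h
  · subst h
    rw [← Complex.exp_add]
    field_simp
    simp
  · have h0 : (Pn δ c N n).eval (zpt δ c m) = 0 := by
      rw [Pn_eval]
      exact Finset.prod_eq_zero (Finset.mem_erase.2 ⟨h, hm⟩) (sub_self _)
    rw [h0, mul_zero]

lemma BA_fin (c : ℂ) (hc : 0 < c.re) (hd : d < 1 / 2) (hδ : ∀ n : ℤ, |δ n| ≤ d) (N : ℕ) (k l : ℤ)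
    (hk : k ∈ Finset.Icc (-(N : ℤ)) N) (hl : l ∈ Finset.Icc (-(N : ℤ)) N) :
    ∑ n ∈ Finset.Icc (-(N : ℤ)) N, Bmat δ c N k n * Amat δ c n l = if k = l then 1 else 0 := by
  let S := Finset.Icc (-(N : ℤ)) N
  let MA : Matrix S S ℂ := fun i j => Amat δ c i j
  let MB : Matrix S S ℂ := fun i j => Bmat δ c N i j
  have h1 : MA * MB = 1 := by
    ext i j
    rw [Matrix.mul_apply, Matrix.one_apply]
    have := AB_fin δ d c hc hd hδ N i j i.2 j.2
    rw [← Finset.sum_coe_sort] at this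
    simp only [Subtype.ext_iff]
    exact this
  have h2 : MB * MA = 1 := mul_eq_one_comm.1 h1
  have h3 := congrFun (congrFun h2 ⟨k, hk⟩) ⟨l, hl⟩
  rw [Matrix.mul_apply, Matrix.one_apply] at h3
  rw [← Finset.sum_coe_sort]
  simp only [Subtype.ext_iff] at h3
  exact h3

lemma BA_tsum (c : ℂ) (hc : 0 < c.re) (hd : d < 1 / 2) (hδ : ∀ n : ℤ, |δ n| ≤ d) (N : ℕ) (k l : ℤ)
    (hl : |l| ≤ N) :
    ∑' n, Amat δ c n l * Bmat δ c N k n = if k = l then 1 else 0 := by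
  have hl' : l ∈ Finset.Icc (-(N : ℤ)) N := Finset.mem_Icc.2 (abs_le.1 hl)
  by_cases hk : k ∈ Finset.Icc (-(N : ℤ)) N
  · rw [← BA_fin δ d c hc hd hδ N k l hk hl', tsum_eq_sum (s := Finset.Icc (-(N : ℤ)) N)]
    · exact Finset.sum_congr rfl fun _ _ => mul_comm _ _
    · intro n hn; rw [Bmat_zero δ c N k n (fun h => hn h.2), mul_zero]
  · have : k ≠ l := fun h => hk (h ▸ hl')
    rw [if_neg this]
    simp [Bmat_zero δ c N k _ (fun h => hk h.1)]

lemma AB_tsum (c : ℂ) (hc : 0 < c.re) (hd : d < 1 / 2) (hδ : ∀ n : ℤ, |δ n| ≤ d) (N : ℕ) (n m : ℤ)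
    (hm : |m| ≤ N) :
    ∑' k, Amat δ c m k * Bmat δ c N k n = if n = m then 1 else 0 := by
  have hm' : m ∈ Finset.Icc (-(N : ℤ)) N := Finset.mem_Icc.2 (abs_le.1 hm)
  by_cases hn : n ∈ Finset.Icc (-(N : ℤ)) N
  · simp only [eq_comm (a := n)]
    rw [← AB_fin δ d c hc hd hδ N m n hm' hn, tsum_eq_sum (s := Finset.Icc (-(N : ℤ)) N)]
    intro k hk; rw [Bmat_zero δ c N k n (fun h => hk h.1), mul_zero]
  · have : n ≠ m := fun h => hn (h ▸ hm')
    rw [if_neg this]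
    simp [Bmat_zero δ c N _ n (fun h => hn h.2)]

end

/-- Kadets-type corollary: if `|δ_n| ≤ δ < 1/2` for all `n ∈ ℤ`, then
`{n + δ_n : n ∈ ℤ}` is a complete interpolating sequence for `V²_c`. -/
theorem statement8 (c : ℂ) (hc : 0 < c.re) (δ : ℤ → ℝ) (d : ℝ) (hd : d < 1 / 2)
    (hδ : ∀ n : ℤ, |δ n| ≤ d) :
    IsCompleteInterpolatingV2 c (Set.range fun n : ℤ => (n : ℝ) + δ n) := by
  have hd0 : 0 < 1 - 2 * d := by linarith
  set ε := c.re * (1 - 2 * d) with hεd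
  have hε : 0 < ε := mul_pos hc hd0
  obtain ⟨C, hC0, hC⟩ := Bmat_bound δ d c hc hd hδ
  let g1 : ℤ → ℝ := fun j => Real.exp (-ε * |(j : ℝ)|)
  let g2 : ℤ → ℝ := fun j => C * Real.exp (-ε * |(j : ℝ)|)
  have hg1 : Summable g1 := summable_expAbs ε hε
  have hg2 : Summable g2 := hg1.mul_left C
  have hg1n : ∀ j, 0 ≤ g1 j := fun j => (Real.exp_pos _).le
  have hg2n : ∀ j, 0 ≤ g2 j := fun j => mul_nonneg hC0.le (Real.exp_pos _).le
  have hG1 : 0 < ∑' j, g1 j := hg1.tsum_pos hg1n 0 (Real.exp_pos _)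
  have hG2 : 0 < ∑' j, g2 j := hg2.tsum_pos hg2n 0 (mul_pos hC0 (Real.exp_pos _))
  have hswap : ∀ m k : ℤ, |((m - k : ℤ) : ℝ)| = |((k - m : ℤ) : ℝ)| := fun m k => by
    push_cast; exact abs_sub_comm _ _
  obtain ⟨T, hT, hTn⟩ := exists_clm g1 hg1n hg1 (Amat δ c) (Amat_bound δ d c hc hd hδ)
  obtain ⟨T', hT', -⟩ := exists_clm g1 hg1n hg1 (fun m k => Amat δ c k m) (fun m k => by
    show _ ≤ Real.exp (-ε * |((m - k : ℤ) : ℝ)|)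
    rw [hswap]
    exact Amat_bound δ d c hc hd hδ k m)
  have hlow := lower_bound g2 hg2n hg2 (Amat δ c) (Bmat δ c) hC (BA_tsum δ d c hc hd hδ) T hT
  have hlow' := lower_bound g2 hg2n hg2 (fun m k => Amat δ c k m) (fun N m k => Bmat δ c N k m)
    (fun N m k => by
      show _ ≤ C * Real.exp (-ε * |((m - k : ℤ) : ℝ)|)
      rw [hswap]
      exact hC N k m) (AB_tsum δ d c hc hd hδ) T' hT'
  have hsurj := surj_of_bounds (Amat δ c) T T' hT hT' _ _ hG2.le hlow hlow'
  have hinj : Function.Injective fun n : ℤ => (n : ℝ) + δ n := by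
    have hlt : ∀ k m : ℤ, k < m → (k : ℝ) + δ k < m + δ m := by
      intro k m hkm
      have h1 := lam_sep δ d hδ k m hkm.le
      have h2 : 0 < (1 - 2 * d) * |(k : ℝ) - m| := by
        refine mul_pos hd0 (abs_pos.2 (sub_ne_zero.2 ?_))
        exact_mod_cast hkm.ne
      linarith
    exact StrictMono.injective (fun k m hkm => hlt k m hkm)
  let e := Equiv.ofInjective _ hinj
  have hgs : ∀ (x : L2Z) (n : ℤ), gaussShiftSum c x ((n : ℝ) + δ n) = T x n := by
    intro x n
    rw [hT]; rfl
  refine ⟨⟨((∑' j, g2 j) ^ 2)⁻¹, by positivity, (∑' j, g1 j) ^ 2, by positivity, ?_⟩, ?_⟩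
  · intro coef hcoef
    let x : L2Z := ⟨coef, (memL2Z_iff _).2 hcoef⟩
    have ht : (∑' lam : (Set.range fun n : ℤ => (n : ℝ) + δ n), ‖gaussShiftSum c coef (lam : ℝ)‖ ^ 2)
        = ‖T x‖ ^ 2 := by
      rw [norm_sq_L2Z, ← e.tsum_eq]
      exact tsum_congr fun n => by rw [← hgs x n]; rfl
    have hx : ∑' n : ℤ, ‖coef n‖ ^ 2 = ‖x‖ ^ 2 := (norm_sq_L2Z x).symm
    rw [ht, hx]
    constructor
    · rw [inv_mul_le_iff₀ (by positivity), ← mul_pow]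
      exact pow_le_pow_left₀ (norm_nonneg _) (hlow x) 2
    · rw [← mul_pow]
      refine pow_le_pow_left₀ (norm_nonneg _) ((T.le_opNorm x).trans ?_) 2
      gcongr
  · intro a ha
    have hy : Summable fun n : ℤ => ‖a (e n)‖ ^ 2 := e.summable_iff.2 ha
    obtain ⟨x, hx⟩ := hsurj ⟨fun n => a (e n), (memL2Z_iff _).2 hy⟩
    refine ⟨x, summable_L2Z x, fun lam => ?_⟩
    obtain ⟨n, rfl⟩ := e.surjective lam
    have h1 : gaussShiftSum c x ((n : ℝ) + δ n) = a (e n) := by rw [hgs, hx]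
    exact h1
end
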